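/- For every graph G in Cact(n;t) with n ≥ 7 and t ≥ 1 that is not isomorphic to G⁰(n,t), it holds that D_R(G) ≥ −(4/3)t² + ((4/3)n − 13/3)t + 3n² − (16/3)n − 19/3, with equality if and only if G is isomorphic to G5. -/

import Mathlib

open Finset

/-- Effective resistance between two vertices of a graph (for a connected graph
this is the effective resistance when every edge is a unit resistor), defined via
the matrix-tree / spanning-two-forest determinant formula. -/
noncomputable def effRes {V : Type*} [Finite V] (G : SimpleGraph V) (u v : V) : ℝ :=
  letI := Fintype.ofFinite V
  letI := Classical.decEq V
  letI : DecidableRel G.Adj := Classical.decRel _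
  if u = v then 0
  else
    Matrix.det ((G.lapMatrix ℝ).submatrix
        (fun w : {w : V // w ≠ u ∧ w ≠ v} => (w : V)) (fun w => (w : V)))
      / Matrix.det ((G.lapMatrix ℝ).submatrix
        (fun w : {w : V // w ≠ u} => (w : V)) (fun w => (w : V)))

/-- The degree resistance distance `D_R(G) = Σ_{ {u,v} ⊆ V } (d(u)+d(v)) R(u,v)`. -/
noncomputable def degRes {V : Type*} [Finite V] (G : SimpleGraph V) : ℝ :=
  letI := Fintype.ofFinite V
  letI := Classical.decEq V
  letI : DecidableRel G.Adj := Classical.decRel _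
  (1 / 2) * ∑ u : V, ∑ v : V, ((G.degree u : ℝ) + (G.degree v : ℝ)) * effRes G u v

/-- The Kirchhoff index `Kf(G) = Σ_{ {u,v} ⊆ V } R(u,v)`. -/
noncomputable def kirchhoffIndex {V : Type*} [Finite V] (G : SimpleGraph V) : ℝ :=
  letI := Fintype.ofFinite V
  (1 / 2) * ∑ u : V, ∑ v : V, effRes G u v

/-- `Kf_v(G) = Σ_{u ∈ V} R(u,v)`. -/
noncomputable def Kfv {V : Type*} [Finite V] (G : SimpleGraph V) (v : V) : ℝ :=
  letI := Fintype.ofFinite V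
  ∑ u : V, effRes G u v

/-- `D_v(G) = Σ_{u ∈ V} d(u) R(u,v)`. -/
noncomputable def Dv {V : Type*} [Finite V] (G : SimpleGraph V) (v : V) : ℝ :=
  letI := Fintype.ofFinite V
  letI := Classical.decEq V
  letI : DecidableRel G.Adj := Classical.decRel _
  ∑ u : V, (G.degree u : ℝ) * effRes G u v

/-- A subgraph is a cycle if it is connected and `2`-regular. -/
def IsCycleSubgraph {V : Type*} {G : SimpleGraph V} (H : G.Subgraph) : Prop :=
  H.coe.Connected ∧ ∀ v ∈ H.verts, {u | H.Adj v u}.ncard = 2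

/-- A cactus is a connected graph in which any two distinct cycles share at most
one vertex (equivalently, every block is an edge or a cycle). -/
def IsCactus {V : Type*} (G : SimpleGraph V) : Prop :=
  G.Connected ∧ ∀ H₁ H₂ : G.Subgraph, IsCycleSubgraph H₁ → IsCycleSubgraph H₂ →
    H₁ ≠ H₂ → (H₁.verts ∩ H₂.verts).ncard ≤ 1

/-- The number of cycles of a graph. -/
noncomputable def numCycles {V : Type*} (G : SimpleGraph V) : ℕ :=
  {H : G.Subgraph | IsCycleSubgraph H}.ncard

/-- `G ∈ Cact(n;t)`: `G` is a cactus with `n` vertices and `t` cycles. -/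
def MemCact {V : Type*} (n t : ℕ) (G : SimpleGraph V) : Prop :=
  IsCactus G ∧ Nat.card V = n ∧ numCycles G = t

/-- `G⁰(n,t)`: `t` triangles (on vertices `2i+1, 2i+2`, `i < t`) and `n - 2t - 1`
pendent edges, all sharing the common vertex `0`. -/
def G0 (n t : ℕ) : SimpleGraph (Fin n) :=
  SimpleGraph.fromRel (fun a b =>
    a.val = 0 ∨ (Odd a.val ∧ b.val = a.val + 1 ∧ b.val ≤ 2 * t))

/-- `G3`: `t` triangles, `n - 2t - 3` pendent edges, and one pendent path of
length 2 (through `2t+1` to `2t+2`), all attached at the common vertex `0`. -/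
def G3g (n t : ℕ) : SimpleGraph (Fin n) :=
  SimpleGraph.fromRel (fun a b =>
    (a.val = 0 ∧ b.val ≠ 2 * t + 2) ∨
    (Odd a.val ∧ b.val = a.val + 1 ∧ b.val ≤ 2 * t) ∨
    (a.val = 2 * t + 1 ∧ b.val = 2 * t + 2))

/-- `G4`: `t` triangles and `n - 2t - 2` pendent edges at the common vertex `0`,
together with one pendent edge (to `2t+1`) attached at the triangle vertex `1`. -/
def G4g (n t : ℕ) : SimpleGraph (Fin n) :=
  SimpleGraph.fromRel (fun a b =>
    (a.val = 0 ∧ b.val ≠ 2 * t + 1) ∨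
    (Odd a.val ∧ b.val = a.val + 1 ∧ b.val ≤ 2 * t) ∨
    (a.val = 1 ∧ b.val = 2 * t + 1))

/-- `G5`: `t - 1` triangles, one quadrilateral `C₄` (on `0, 2t-1, 2t, 2t+1`), and
`n - 2t - 2` pendent edges, all sharing the common vertex `0`. -/
def G5g (n t : ℕ) : SimpleGraph (Fin n) :=
  SimpleGraph.fromRel (fun a b =>
    (a.val = 0 ∧ b.val ≠ 2 * t) ∨
    (Odd a.val ∧ b.val = a.val + 1 ∧ b.val ≤ 2 * t - 2) ∨
    (a.val = 2 * t - 1 ∧ b.val = 2 * t) ∨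
    (a.val = 2 * t ∧ b.val = 2 * t + 1))

/-- `G6`: `t - 1` triangles, one quadrilateral `C₄` (on `0, 2t-1, 2t, 2t+1`), and
`n - 2t - 3` pendent edges at the common vertex `0`, together with one pendent edge
(to `2t+2`) attached at the quadrilateral vertex `2t-1`, which is adjacent to `0`. -/
def G6g (n t : ℕ) : SimpleGraph (Fin n) :=
  SimpleGraph.fromRel (fun a b =>
    (a.val = 0 ∧ b.val ≠ 2 * t ∧ b.val ≠ 2 * t + 2) ∨
    (Odd a.val ∧ b.val = a.val + 1 ∧ b.val ≤ 2 * t - 2) ∨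
    (a.val = 2 * t - 1 ∧ (b.val = 2 * t ∨ b.val = 2 * t + 2)) ∨
    (a.val = 2 * t ∧ b.val = 2 * t + 1))

/-- `G7`: `t - 1` triangles, one quadrilateral `C₄` (on `0, 2t-1, 2t, 2t+1`), and
`n - 2t - 3` pendent edges at the common vertex `0`, together with one pendent edge
(to `2t+2`) attached at the quadrilateral vertex `2t`, which is opposite to `0`. -/
def G7g (n t : ℕ) : SimpleGraph (Fin n) :=
  SimpleGraph.fromRel (fun a b =>
    (a.val = 0 ∧ b.val ≠ 2 * t ∧ b.val ≠ 2 * t + 2) ∨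
    (Odd a.val ∧ b.val = a.val + 1 ∧ b.val ≤ 2 * t - 2) ∨
    (a.val = 2 * t - 1 ∧ b.val = 2 * t) ∨
    (a.val = 2 * t ∧ (b.val = 2 * t + 1 ∨ b.val = 2 * t + 2)))

/-- `G8`: `t - 2` triangles, two quadrilaterals `C₄` (on `0, 2t-3, 2t-2, 2t-1` and
on `0, 2t, 2t+1, 2t+2`), and `n - 2t - 3` pendent edges, all sharing the common
vertex `0`. -/
def G8g (n t : ℕ) : SimpleGraph (Fin n) :=
  SimpleGraph.fromRel (fun a b =>
    (a.val = 0 ∧ b.val ≠ 2 * t - 2 ∧ b.val ≠ 2 * t + 1) ∨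
    (Odd a.val ∧ b.val = a.val + 1 ∧ b.val ≤ 2 * t - 4) ∨
    (a.val = 2 * t - 3 ∧ b.val = 2 * t - 2) ∨
    (a.val = 2 * t - 2 ∧ b.val = 2 * t - 1) ∨
    (a.val = 2 * t ∧ b.val = 2 * t + 1) ∨
    (a.val = 2 * t + 1 ∧ b.val = 2 * t + 2))

/-- `G9`: `t - 1` triangles, one quadrilateral `C₄` (on `0, 2t-1, 2t, 2t+1`), and
`n - 2t - 3` pendent edges at the common vertex `0`, together with one pendent edge
(to `2t+2`) attached at the non-central triangle vertex `1`. -/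
def G9g (n t : ℕ) : SimpleGraph (Fin n) :=
  SimpleGraph.fromRel (fun a b =>
    (a.val = 0 ∧ b.val ≠ 2 * t ∧ b.val ≠ 2 * t + 2) ∨
    (Odd a.val ∧ b.val = a.val + 1 ∧ b.val ≤ 2 * t - 2) ∨
    (a.val = 2 * t - 1 ∧ b.val = 2 * t) ∨
    (a.val = 2 * t ∧ b.val = 2 * t + 1) ∨
    (a.val = 1 ∧ b.val = 2 * t + 2))

/-- `G10`: `t - 1` triangles, one pentagon `C₅` (on `0, 2t-1, 2t, 2t+1, 2t+2`), and
`n - 2t - 3` pendent edges, all sharing the common vertex `0`. -/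
def G10g (n t : ℕ) : SimpleGraph (Fin n) :=
  SimpleGraph.fromRel (fun a b =>
    (a.val = 0 ∧ b.val ≠ 2 * t ∧ b.val ≠ 2 * t + 1) ∨
    (Odd a.val ∧ b.val = a.val + 1 ∧ b.val ≤ 2 * t - 2) ∨
    (a.val = 2 * t - 1 ∧ b.val = 2 * t) ∨
    (a.val = 2 * t ∧ b.val = 2 * t + 1) ∨
    (a.val = 2 * t + 1 ∧ b.val = 2 * t + 2))


section Resistance
open scoped Classical

lemma effRes_def {V : Type*} [Fintype V] [DecidableEq V] (G : SimpleGraph V) [DecidableRel G.Adj]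
    (u v : V) : effRes G u v = if u = v then 0 else
    Matrix.det ((G.lapMatrix ℝ).submatrix
        (fun w : {w : V // w ≠ u ∧ w ≠ v} => (w : V)) (fun w => (w : V)))
      / Matrix.det ((G.lapMatrix ℝ).submatrix
        (fun w : {w : V // w ≠ u} => (w : V)) (fun w => (w : V))) := by
  unfold effRes
  congr!

lemma det_reduced_ne {V : Type*} [Fintype V] {G : SimpleGraph V} (hc : G.Connected) (u : V) :
    Matrix.det ((G.lapMatrix ℝ).submatrix
        (fun w : {w : V // w ≠ u} => (w : V)) (fun w => (w : V))) ≠ 0 := by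
  intro h0
  obtain ⟨g, hg, hz⟩ := Matrix.exists_mulVec_eq_zero_iff.mpr h0
  set f : V → ℝ := fun w => if h : w ≠ u then g ⟨w, h⟩ else 0 with hf
  have fu : f u = 0 := by simp [hf]
  have fw : ∀ w : {w : V // w ≠ u}, f w = g w := by
    intro w; simp [hf, w.2]
  have key : ∀ w : V, w ≠ u → (G.lapMatrix ℝ).mulVec f w = 0 := by
    intro w hw
    have := congrFun hz ⟨w, hw⟩
    simp only [Matrix.mulVec, dotProduct, Matrix.submatrix_apply, Pi.zero_apply] at this ⊢
    rw [← Fintype.sum_subtype_add_sum_subtype (fun x => x ≠ u), ← this]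
    have h2 : ∑ i : {x // ¬ (x ≠ u)}, G.lapMatrix ℝ w i * f i = 0 := by
      apply Finset.sum_eq_zero
      rintro ⟨x, hx⟩ -
      simp only [not_not] at hx
      subst hx
      simp [fu]
    rw [h2, add_zero]
    exact Finset.sum_congr rfl fun x _ => by rw [fw]
  have h3 : Matrix.toLinearMap₂' ℝ (G.lapMatrix ℝ) f f = 0 := by
    rw [Matrix.toLinearMap₂'_apply']
    simp only [dotProduct]
    apply Finset.sum_eq_zero
    intro w _
    by_cases hw : w = u
    · subst hw; simp [fu]
    · rw [key w hw, mul_zero]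
  rw [SimpleGraph.lapMatrix_toLinearMap₂'_apply'_eq_zero_iff_forall_reachable] at h3
  apply hg
  ext w
  rw [← fw, h3 w u (hc.preconnected _ _), fu]; rfl

lemma effRes_eq {V : Type*} [Fintype V] {G : SimpleGraph V} (hc : G.Connected) (u v : V)
    (φ : V → ℝ)
    (h : ∀ w, ∑ x, (if G.Adj w x then φ w - φ x else 0)
      = (if w = u then 1 else 0) - (if w = v then 1 else 0)) :
    effRes G u v = φ u - φ v := by
  rw [effRes_def]
  split_ifs with huv
  · subst huv; simp
  have hL : ∀ w, (G.lapMatrix ℝ).mulVec φ w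
      = (if w = u then 1 else 0) - (if w = v then 1 else 0) := by
    intro w
    rw [← h w, SimpleGraph.lapMatrix_mulVec_apply, SimpleGraph.degree_eq_sum_if_adj,
      SimpleGraph.neighborFinset_eq_filter, Finset.sum_filter, Finset.sum_mul,
      ← Finset.sum_sub_distrib]
    refine Finset.sum_congr rfl fun x _ => ?_
    split_ifs <;> simp
  have hd := det_reduced_ne hc u
  set A : Matrix {w : V // w ≠ u} {w : V // w ≠ u} ℝ := (G.lapMatrix ℝ).submatrix
        (fun w : {w : V // w ≠ u} => (w : V)) (fun w => (w : V)) with hA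
  let v' : {w : V // w ≠ u} := ⟨v, fun e => huv e.symm⟩
  have hmul : A.mulVec (fun w => φ u - φ w) = Pi.single v' 1 := by
    ext w
    have h1 := hL w
    have h0 := congrFun (SimpleGraph.lapMatrix_mulVec_const_eq_zero (R := ℝ) G) w
    simp only [Matrix.mulVec, dotProduct, hA, Matrix.submatrix_apply, Pi.zero_apply, mul_one]
      at h0 h1 ⊢
    have h2 : ∑ x, G.lapMatrix ℝ w x * (φ u - φ x) = if (w:V) = v then 1 else 0 := by
      simp only [mul_sub, Finset.sum_sub_distrib, ← Finset.sum_mul, h0, h1]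
      simp [w.2]
    rw [← Fintype.sum_subtype_add_sum_subtype (fun x => x ≠ u)] at h2
    have h3 : ∑ i : {x // ¬ (x ≠ u)}, G.lapMatrix ℝ w i * (φ u - φ i) = 0 := by
      apply Finset.sum_eq_zero
      rintro ⟨x, hx⟩ -
      simp only [not_not] at hx
      subst hx
      simp
    rw [h3, add_zero] at h2
    rw [h2, Pi.single_apply]
    simp [v', Subtype.ext_iff]
  have hcr : A.det * (φ u - φ v) = (A.updateCol v' (Pi.single v' 1)).det := by
    rw [← Matrix.cramer_apply, ← hmul, Matrix.cramer_eq_adjugate_mulVec, Matrix.mulVec_mulVec,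
      Matrix.adjugate_mul, Matrix.smul_mulVec, Matrix.one_mulVec]
    simp [v']
  have hdet : (A.updateCol v' (Pi.single v' 1)).det = Matrix.det ((G.lapMatrix ℝ).submatrix
        (fun w : {w : V // w ≠ u ∧ w ≠ v} => (w : V)) (fun w => (w : V))) := by
    rw [Matrix.twoBlockTriangular_det _ (fun i => i = v')]
    · have e1 : (Matrix.toSquareBlockProp (A.updateCol v' (Pi.single v' 1)) (fun i => i = v')).det
          = 1 := by
        have : Unique {i : {w : V // w ≠ u} // i = v'} := ⟨⟨⟨v', rfl⟩⟩, fun x => Subtype.ext x.2⟩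
        rw [Matrix.det_unique]
        have : ((default : {i : {w : V // w ≠ u} // i = v'}) : {w : V // w ≠ u}) = v' :=
          (default : {i : {w : V // w ≠ u} // i = v'}).2
        simp [Matrix.toSquareBlockProp_def, this]
      refine (congrArg₂ (· * ·) (Eq.trans (by congr!) e1) rfl).trans ?_
      rw [one_mul]
      let e : {i : {w : V // w ≠ u} // ¬ i = v'} ≃ {w : V // w ≠ u ∧ w ≠ v} :=
        { toFun := fun x => ⟨x.1.1, x.1.2, fun hh => x.2 (Subtype.ext hh)⟩
          invFun := fun x => ⟨⟨x.1, x.2.1⟩, fun hh => x.2.2 (congrArg Subtype.val hh)⟩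
          left_inv := fun x => rfl
          right_inv := fun x => rfl }
      rw [← Matrix.det_submatrix_equiv_self e]
      congr 1
      ext i j
      simp [Matrix.toSquareBlockProp_def, Matrix.updateCol_apply, j.2, hA, e]
    · intro i hi j hj
      subst hj
      simp [hi]
  rw [← hdet, ← hcr]
  field_simp

lemma degRes_eq {V : Type*} [Fintype V] (G : SimpleGraph V) :
    degRes G = (1 / 2) * ∑ u : V, ∑ v : V, ((G.degree u : ℝ) + (G.degree v : ℝ)) * effRes G u v := by
  unfold degRes
  congr!

end Resistance

section BlockData
open scoped Classical
set_option linter.unusedSectionVars false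

/-- Block decomposition data for a graph, all of whose blocks are edges or cycles. -/
structure BD {V : Type*} [Fintype V] (G : SimpleGraph V) (ι : Type*) where
  vs : ι → Finset V
  pr : ι → V → V
  dg : ι → ℕ
  kap : ι → ℝ
  r : ι → V → V → ℝ
  pr_mem : ∀ B w, pr B w ∈ vs B
  pr_id : ∀ B w, w ∈ vs B → pr B w = w
  pr_block : ∀ B B', B ≠ B' → ∀ x ∈ vs B', ∀ y ∈ vs B', pr B x = pr B y
  edge : ∀ u v, G.Adj u v → ∃ B, u ∈ vs B ∧ v ∈ vs B
  r_symm : ∀ B x y, r B x y = r B y x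
  r_self : ∀ B x, r B x x = 0
  r_pos : ∀ B, ∀ x ∈ vs B, ∀ y ∈ vs B, x ≠ y → 2 / 3 ≤ r B x y
  dg_spec : ∀ B, (dg B = 1 ∧ (vs B).card = 2 ∧ kap B = 1) ∨
    (dg B = 2 ∧ 3 ≤ (vs B).card ∧ kap B = (((vs B).card : ℝ) ^ 2 - 1) / 6)
  deg : ∀ B, ∀ x ∈ vs B, (Finset.univ.filter (fun v => G.Adj x v ∧ v ∈ vs B)).card = dg B
  sum : ∀ B, ∀ y ∈ vs B, ∑ x ∈ vs B, r B y x = kap B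
  lap : ∀ B, ∀ x ∈ vs B, ∀ w ∈ vs B,
    ∑ v, (if G.Adj w v ∧ v ∈ vs B then r B x w - r B x v else 0)
      = 2 / ((vs B).card : ℝ) - (if w = x then 2 else 0)

namespace BD
variable {V : Type*} [Fintype V] {G : SimpleGraph V} {ι : Type*} [Fintype ι] (D : BD G ι)

lemma adj_pr {u v : V} (h : G.Adj u v) (B : ι) :
    D.pr B u = D.pr B v ∨ (u ∈ D.vs B ∧ v ∈ D.vs B) := by
  obtain ⟨B0, h1, h2⟩ := D.edge u v h
  by_cases hB : B = B0
  · subst hB; exact Or.inr ⟨h1, h2⟩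
  · exact Or.inl (D.pr_block B B0 hB u h1 v h2)

lemma pr_eq_self_iff (B : ι) (z : V) : D.pr B z = z ↔ z ∈ D.vs B :=
  ⟨fun h => h ▸ D.pr_mem B z, D.pr_id B z⟩

lemma inter {B B' : ι} (h : B ≠ B') {x y : V} (hx : x ∈ D.vs B) (hx' : x ∈ D.vs B')
    (hy : y ∈ D.vs B) (hy' : y ∈ D.vs B') : x = y := by
  have := D.pr_block B B' h x hx' y hy'
  rwa [D.pr_id B x hx, D.pr_id B y hy] at this

lemma const_adj {u v : V} (h : G.Adj u v) (z : V) :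
    (∑ B, (if D.pr B u = z then (1:ℝ) else 0)) - (if u = z then 1 else 0)
      = (∑ B, (if D.pr B v = z then (1:ℝ) else 0)) - (if v = z then 1 else 0) := by
  obtain ⟨B0, h1, h2⟩ := D.edge u v h
  have key : ∑ B, ((if D.pr B u = z then (1:ℝ) else 0) - (if D.pr B v = z then (1:ℝ) else 0))
      = (if u = z then 1 else 0) - (if v = z then 1 else 0) := by
    rw [Finset.sum_eq_single B0]
    · rw [D.pr_id _ _ h1, D.pr_id _ _ h2]
    · intro B _ hB
      rw [D.pr_block B B0 hB u h1 v h2, sub_self]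
    · intro h; exact absurd (Finset.mem_univ _) h
  rw [Finset.sum_sub_distrib] at key
  linarith

lemma const (hc : G.Connected) (u v z : V) :
    (∑ B, (if D.pr B u = z then (1:ℝ) else 0)) - (if u = z then 1 else 0)
      = (∑ B, (if D.pr B v = z then (1:ℝ) else 0)) - (if v = z then 1 else 0) := by
  obtain ⟨p⟩ := hc.preconnected u v
  induction p with
  | nil => rfl
  | cons h _ ih => exact (D.const_adj h z).trans ih

lemma lap_all (B : ι) (x : V) (hx : x ∈ D.vs B) (w : V) :
    ∑ v, (if G.Adj w v then D.r B x (D.pr B w) - D.r B x (D.pr B v) else 0)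
      = (if w ∈ D.vs B then 2 / ((D.vs B).card : ℝ) else 0) - (if w = x then 2 else 0) := by
  by_cases hw : w ∈ D.vs B
  · rw [if_pos hw, ← D.lap B x hx w hw]
    refine Finset.sum_congr rfl fun v _ => ?_
    by_cases hv : v ∈ D.vs B
    · simp [hv, D.pr_id B w hw, D.pr_id B v hv]
    · by_cases ha : G.Adj w v
      · rcases D.adj_pr ha B with h | h
        · simp [hv, h]
        · exact absurd h.2 hv
      · simp [ha]
  · have hne : w ≠ x := fun h => hw (h ▸ hx)
    rw [if_neg hw, if_neg hne, sub_zero]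
    apply Finset.sum_eq_zero
    intro v _
    by_cases ha : G.Adj w v
    · rcases D.adj_pr ha B with h | h
      · simp [h]
      · exact absurd h.1 hw
    · simp [ha]

lemma effRes_formula (hc : G.Connected) (u v : V) :
    effRes G u v = ∑ B, D.r B (D.pr B u) (D.pr B v) := by
  rw [effRes_eq hc u v (fun w => (1 / 2) * ∑ B, (D.r B (D.pr B v) (D.pr B w)
    - D.r B (D.pr B u) (D.pr B w)))]
  · simp only [D.r_self, ← mul_sub, ← Finset.sum_sub_distrib]
    rw [Finset.mul_sum]
    refine Finset.sum_congr rfl fun B _ => ?_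
    rw [D.r_symm B (D.pr B v)]
    ring
  · intro w
    have h1 : ∀ x, (if G.Adj w x then (1 / 2) * ∑ B, (D.r B (D.pr B v) (D.pr B w)
        - D.r B (D.pr B u) (D.pr B w)) - (1 / 2) * ∑ B, (D.r B (D.pr B v) (D.pr B x)
        - D.r B (D.pr B u) (D.pr B x)) else 0)
        = (1 / 2) * ∑ B, ((if G.Adj w x then D.r B (D.pr B v) (D.pr B w)
          - D.r B (D.pr B v) (D.pr B x) else 0) - (if G.Adj w x then D.r B (D.pr B u) (D.pr B w)
          - D.r B (D.pr B u) (D.pr B x) else 0)) := by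
      intro x
      split_ifs
      · rw [← mul_sub, ← Finset.sum_sub_distrib]
        congr 1
        refine Finset.sum_congr rfl fun B _ => ?_
        ring
      · simp
    simp only [h1]
    rw [← Finset.mul_sum, Finset.sum_comm]
    simp only [Finset.sum_sub_distrib (f := fun x => _)]
    have h2 : ∀ B, (∑ x, (if G.Adj w x then D.r B (D.pr B v) (D.pr B w)
          - D.r B (D.pr B v) (D.pr B x) else 0)) - (∑ x, (if G.Adj w x then
          D.r B (D.pr B u) (D.pr B w) - D.r B (D.pr B u) (D.pr B x) else 0))
          = 2 * ((if D.pr B u = w then (1:ℝ) else 0) - (if D.pr B v = w then (1:ℝ) else 0)) := by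
      intro B
      rw [D.lap_all B _ (D.pr_mem B v), D.lap_all B _ (D.pr_mem B u)]
      simp only [eq_comm (a := w)]
      split_ifs <;> ring
    rw [← Finset.sum_sub_distrib, Finset.sum_congr rfl fun B _ => h2 B, ← Finset.mul_sum,
      Finset.sum_sub_distrib]
    have := D.const hc u v w
    simp only [eq_comm (a := w)]
    linarith

lemma count (hc : G.Connected) :
    ∑ B, (((D.vs B).card : ℝ) - 1) = Fintype.card V - 1 := by
  obtain ⟨u0⟩ := hc.nonempty
  have h : ∀ z, (∑ B, (if z ∈ D.vs B then (1:ℝ) else 0)) - 1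
      = (∑ B, (if D.pr B u0 = z then (1:ℝ) else 0)) - (if u0 = z then 1 else 0) := by
    intro z
    rw [← D.const hc z u0 z]
    simp [D.pr_eq_self_iff]
  have h2 := Finset.sum_congr rfl (fun z (_ : z ∈ Finset.univ) => h z)
  rw [Finset.sum_sub_distrib, Finset.sum_sub_distrib, Finset.sum_comm,
    Finset.sum_comm (s := Finset.univ (α := V))] at h2
  simp only [Finset.sum_ite_eq, Finset.mem_univ, if_true, Finset.sum_ite_mem, Finset.univ_inter,
    Finset.sum_const, nsmul_eq_mul, mul_one, Finset.card_univ] at h2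
  rw [Finset.sum_sub_distrib]
  simp only [Finset.sum_const, nsmul_eq_mul, mul_one, Finset.card_univ]
  linarith

lemma degree_eq (u : V) : (G.degree u : ℝ) = ∑ B, (if u ∈ D.vs B then (D.dg B : ℝ) else 0) := by
  rw [SimpleGraph.degree_eq_sum_if_adj]
  have h1 : ∀ B, (if u ∈ D.vs B then (D.dg B : ℝ) else 0)
      = ∑ v, (if u ∈ D.vs B then (if G.Adj u v ∧ v ∈ D.vs B then (1:ℝ) else 0) else 0) := by
    intro B
    split_ifs with h
    · rw [← D.deg B u h, Finset.sum_boole]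
    · simp
  rw [Finset.sum_congr rfl fun B _ => h1 B, Finset.sum_comm]
  refine Finset.sum_congr rfl fun v _ => ?_
  split_ifs with ha
  · obtain ⟨B0, hu, hv⟩ := D.edge u v ha
    rw [Finset.sum_eq_single B0]
    · simp [hu, hv, ha]
    · intro B _ hB
      by_cases h1 : u ∈ D.vs B
      · by_cases h2 : v ∈ D.vs B
        · exact absurd (D.inter hB h1 hu h2 hv) ha.ne
        · simp [h2]
      · simp [h1]
    · intro h; exact absurd (Finset.mem_univ _) h
  · simp [ha]

/-- degree outside of block `B` -/
noncomputable def dout (B : ι) (u : V) : ℝ :=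
  ∑ B' ∈ Finset.univ.erase B, (if u ∈ D.vs B' then (D.dg B' : ℝ) else 0)

lemma degree_split (B : ι) (u : V) :
    (G.degree u : ℝ) = (if u ∈ D.vs B then (D.dg B : ℝ) else 0) + D.dout B u := by
  rw [D.degree_eq, dout]
  exact (Finset.add_sum_erase Finset.univ (fun B => if u ∈ D.vs B then (D.dg B : ℝ) else 0)
    (Finset.mem_univ B)).symm

lemma dout_nonneg (B : ι) (u : V) : 0 ≤ D.dout B u := by
  apply Finset.sum_nonneg; intro i _; split_ifs <;> positivity

lemma dg_pos (B : ι) : 1 ≤ D.dg B := by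
  rcases D.dg_spec B with h | h <;> omega

lemma dout_ge {B B' : ι} (h : B' ≠ B) {u : V} (hu : u ∈ D.vs B') : 1 ≤ D.dout B u := by
  have : (1:ℝ) ≤ (if u ∈ D.vs B' then (D.dg B' : ℝ) else 0) := by
    rw [if_pos hu]; exact_mod_cast D.dg_pos B'
  refine this.trans ?_
  apply Finset.single_le_sum (f := fun B' => if u ∈ D.vs B' then (D.dg B' : ℝ) else 0)
  · intro i _; split_ifs <;> positivity
  · simp [h]

lemma sum_degree : ∑ u, (G.degree u : ℝ) = ∑ B, (D.dg B : ℝ) * (D.vs B).card := by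
  simp only [D.degree_eq]
  rw [Finset.sum_comm]
  refine Finset.sum_congr rfl fun B _ => ?_
  simp [Finset.sum_ite_mem, mul_comm]

lemma sum_degree' (hc : G.Connected) : ∑ u, (G.degree u : ℝ) = 2 * (Fintype.card V - 1)
    + 2 * (Finset.univ.filter (fun B => D.dg B = 2)).card := by
  rw [D.sum_degree, ← D.count hc, ← Finset.sum_boole, Finset.mul_sum, Finset.mul_sum,
    ← Finset.sum_add_distrib]
  refine Finset.sum_congr rfl fun B _ => ?_
  rcases D.dg_spec B with ⟨h1, h2, -⟩ | ⟨h1, h2, -⟩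
  · simp [h1, h2]; norm_num
  · simp [h1]; ring

/-- excess contributed by block `B` -/
noncomputable def extra (B : ι) : ℝ :=
  ∑ u, D.dout B u * ∑ w ∈ Finset.univ.filter (fun w => w ∉ D.vs B), D.r B (D.pr B u) (D.pr B w)

/-- base value of block `B` -/
noncomputable def base (B : ι) : ℝ :=
  D.kap B * ((Fintype.card V : ℝ) * D.dg B + (∑ u, (G.degree u : ℝ)) - D.dg B * (D.vs B).card)

lemma degRes_formula (hc : G.Connected) : degRes G = ∑ B, (D.base B + D.extra B) := by
  have hs : ∀ u v, effRes G u v = effRes G v u := by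
    intro u v
    rw [D.effRes_formula hc, D.effRes_formula hc]
    exact Finset.sum_congr rfl fun B _ => D.r_symm _ _ _
  have h1 : degRes G = ∑ u, ∑ v, (G.degree u : ℝ) * effRes G u v := by
    rw [degRes_eq]
    simp only [add_mul, Finset.sum_add_distrib]
    have : ∑ u, ∑ v, (G.degree v : ℝ) * effRes G u v = ∑ u, ∑ v, (G.degree u : ℝ) * effRes G u v := by
      rw [Finset.sum_comm]
      refine Finset.sum_congr rfl fun u _ => Finset.sum_congr rfl fun v _ => ?_
      rw [hs]
    rw [this]; ring
  rw [h1]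
  simp only [D.effRes_formula hc, Finset.mul_sum]
  have h2 : ∑ u, ∑ v, ∑ B, (G.degree u : ℝ) * D.r B (D.pr B u) (D.pr B v)
      = ∑ B, ∑ u, ∑ v, (G.degree u : ℝ) * D.r B (D.pr B u) (D.pr B v) := by
    rw [Finset.sum_congr rfl fun v _ => Finset.sum_comm]
    rw [Finset.sum_comm]
  rw [h2]
  refine Finset.sum_congr rfl fun B _ => ?_
  have hsumw : ∀ y ∈ D.vs B, ∑ w, D.r B y (D.pr B w) = D.kap B +
      ∑ w ∈ Finset.univ.filter (fun w => w ∉ D.vs B), D.r B y (D.pr B w) := by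
    intro y hy
    rw [← Finset.sum_filter_add_sum_filter_not Finset.univ (fun w => w ∈ D.vs B)]
    congr 1
    rw [← D.sum B y hy]
    have : Finset.univ.filter (fun w => w ∈ D.vs B) = D.vs B := by ext; simp
    rw [this]
    exact Finset.sum_congr rfl fun x hx => by rw [D.pr_id B x hx]
  have h3 : ∑ u, (if u ∈ D.vs B then (D.dg B : ℝ) else 0) * ∑ v, D.r B (D.pr B u) (D.pr B v)
      = D.dg B * (Fintype.card V * D.kap B) := by
    have : ∀ v, ∑ u ∈ D.vs B, D.r B u (D.pr B v) = D.kap B := by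
      intro v
      rw [← D.sum B _ (D.pr_mem B v)]
      exact Finset.sum_congr rfl fun x _ => D.r_symm _ _ _
    simp only [ite_mul, zero_mul, Finset.sum_ite_mem, Finset.univ_inter]
    rw [← Finset.mul_sum, Finset.sum_congr rfl fun u hu => by rw [D.pr_id B u hu],
      Finset.sum_comm, Finset.sum_congr rfl fun v _ => this v]
    simp
  have h4 : ∑ u, D.dout B u = (∑ u, (G.degree u : ℝ)) - D.dg B * (D.vs B).card := by
    rw [Finset.sum_congr rfl fun u _ => D.degree_split B u, Finset.sum_add_distrib,
      Finset.sum_ite_mem]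
    simp [mul_comm]
  simp only [← Finset.mul_sum]
  rw [Finset.sum_congr rfl fun u _ => by rw [D.degree_split B u, add_mul], Finset.sum_add_distrib,
    h3, Finset.sum_congr rfl fun u _ => by rw [hsumw _ (D.pr_mem B u), mul_add],
    Finset.sum_add_distrib, ← Finset.sum_mul, h4, base, extra]
  ring

lemma r_nonneg (B : ι) (u w : V) : 0 ≤ D.r B (D.pr B u) (D.pr B w) := by
  by_cases h : D.pr B u = D.pr B w
  · rw [h, D.r_self]
  · exact le_trans (by norm_num) (D.r_pos B _ (D.pr_mem B u) _ (D.pr_mem B w) h)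

lemma extra_nonneg (B : ι) : 0 ≤ D.extra B :=
  Finset.sum_nonneg fun u _ => mul_nonneg (D.dout_nonneg B u)
    (Finset.sum_nonneg fun w _ => D.r_nonneg B u w)

lemma fiber_dout (hc : G.Connected) [Nontrivial V] (B : ι) (w : V) (hw : w ∉ D.vs B) :
    2 ≤ ∑ u ∈ Finset.univ.filter (fun u => D.pr B u = D.pr B w), D.dout B u := by
  obtain ⟨v, hv⟩ := hc.preconnected.exists_adj_of_nontrivial w
  obtain ⟨B0, h1, h2⟩ := D.edge w v hv
  have hB : B0 ≠ B := by rintro rfl; exact hw h1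
  have hpr : D.pr B v = D.pr B w := D.pr_block B B0 hB.symm v h2 w h1
  have hsub : ({w, v} : Finset V) ⊆ Finset.univ.filter (fun u => D.pr B u = D.pr B w) := by
    intro x; simp only [Finset.mem_insert, Finset.mem_singleton, Finset.mem_filter,
      Finset.mem_univ, true_and]
    rintro (rfl | rfl)
    · rfl
    · exact hpr
  refine le_trans ?_ (Finset.sum_le_sum_of_subset_of_nonneg hsub fun i _ _ => D.dout_nonneg B i)
  rw [Finset.sum_pair hv.ne]
  linarith [D.dout_ge hB h1, D.dout_ge hB h2]

lemma extra_ge (hc : G.Connected) (B : ι) (w w' : V) (hw : w ∉ D.vs B) (hw' : w' ∉ D.vs B)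
    (hne : D.pr B w ≠ D.pr B w') :
    (2 / 3) * (2 * ((Fintype.card V : ℝ) - (D.vs B).card - 1)
      + ((∑ u, (G.degree u : ℝ)) - D.dg B * (D.vs B).card) - 2) ≤ D.extra B := by
  have : Nontrivial V := ⟨w, w', fun h => hne (by rw [h])⟩
  set x := D.pr B w with hx
  have h4 : ∑ u, D.dout B u = (∑ u, (G.degree u : ℝ)) - D.dg B * (D.vs B).card := by
    rw [Finset.sum_congr rfl fun u _ => D.degree_split B u, Finset.sum_add_distrib,
      Finset.sum_ite_mem]
    simp [mul_comm]
  set E1 := ∑ u ∈ Finset.univ.filter (fun u => D.pr B u = x), D.dout B u with hE1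
  set E2 := ∑ u ∈ Finset.univ.filter (fun u => ¬ D.pr B u = x), D.dout B u with hE2
  have hE : E1 + E2 = ∑ u, D.dout B u := Finset.sum_filter_add_sum_filter_not _ _ _
  have h1 : 2 ≤ E1 := D.fiber_dout hc B w hw
  have h2 : 2 ≤ E2 := by
    refine (D.fiber_dout hc B w' hw').trans ?_
    apply Finset.sum_le_sum_of_subset_of_nonneg
    · intro u; simp only [Finset.mem_filter, Finset.mem_univ, true_and]
      intro h h'; exact hne (h'.symm.trans h)
    · intro i _ _; exact D.dout_nonneg B i
  set O := Finset.univ.filter (fun w => w ∉ D.vs B) with hO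
  set X := O.filter (fun u => D.pr B u = x) with hX
  set Y := O.filter (fun u => ¬ D.pr B u = x) with hY
  have hXY : X.card + Y.card = O.card := Finset.card_filter_add_card_filter_not _
  have hOc : (O.card : ℝ) = (Fintype.card V : ℝ) - (D.vs B).card := by
    have : O = (D.vs B)ᶜ := by ext; simp [hO]
    rw [this, Finset.card_compl, Nat.cast_sub (Finset.card_le_univ _)]
  have hX1 : (1:ℝ) ≤ X.card := by
    exact_mod_cast Finset.card_pos.mpr ⟨w, by simp [hX, hO, hw, hx]⟩
  have hY1 : (1:ℝ) ≤ Y.card := by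
    exact_mod_cast Finset.card_pos.mpr ⟨w', by simp [hY, hO, hw', Ne.symm hne]⟩
  have hb1 : ∀ u, D.pr B u = x → (2/3) * (Y.card : ℝ) ≤ ∑ w ∈ O, D.r B (D.pr B u) (D.pr B w) := by
    intro u hu
    calc (2/3) * (Y.card : ℝ) = ∑ w ∈ Y, (2/3 : ℝ) := by simp [mul_comm]
      _ ≤ ∑ w ∈ Y, D.r B (D.pr B u) (D.pr B w) := by
        refine Finset.sum_le_sum fun y hy => D.r_pos B _ (D.pr_mem B u) _ (D.pr_mem B y) ?_
        rw [hu]; exact fun h => (Finset.mem_filter.mp hy).2 h.symm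
      _ ≤ _ := Finset.sum_le_sum_of_subset_of_nonneg (Finset.filter_subset _ _)
        fun i _ _ => D.r_nonneg B u i
  have hb2 : ∀ u, ¬ D.pr B u = x → (2/3) * (X.card : ℝ) ≤ ∑ w ∈ O, D.r B (D.pr B u) (D.pr B w) := by
    intro u hu
    calc (2/3) * (X.card : ℝ) = ∑ w ∈ X, (2/3 : ℝ) := by simp [mul_comm]
      _ ≤ ∑ w ∈ X, D.r B (D.pr B u) (D.pr B w) := by
        refine Finset.sum_le_sum fun y hy => D.r_pos B _ (D.pr_mem B u) _ (D.pr_mem B y) ?_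
        rw [(Finset.mem_filter.mp hy).2]; exact hu
      _ ≤ _ := Finset.sum_le_sum_of_subset_of_nonneg (Finset.filter_subset _ _)
        fun i _ _ => D.r_nonneg B u i
  have hfin : E1 * ((2/3) * (Y.card : ℝ)) + E2 * ((2/3) * (X.card : ℝ)) ≤ D.extra B := by
    rw [extra, ← Finset.sum_filter_add_sum_filter_not Finset.univ (fun u => D.pr B u = x),
      hE1, hE2, Finset.sum_mul, Finset.sum_mul]
    apply add_le_add
    · exact Finset.sum_le_sum fun u hu =>
        mul_le_mul_of_nonneg_left (hb1 u (Finset.mem_filter.mp hu).2) (D.dout_nonneg B u)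
    · exact Finset.sum_le_sum fun u hu =>
        mul_le_mul_of_nonneg_left (hb2 u (Finset.mem_filter.mp hu).2) (D.dout_nonneg B u)
  refine le_trans ?_ hfin
  rw [← h4, ← hE, ← hOc, ← hXY]
  push_cast
  nlinarith [mul_nonneg (sub_nonneg.mpr h1) (sub_nonneg.mpr hY1),
    mul_nonneg (sub_nonneg.mpr h2) (sub_nonneg.mpr hX1)]

end BD
end BlockData

section Optimization
open scoped Classical
set_option linter.unusedSectionVars false

/-- excess of a cycle of length `k` -/
noncomputable def sExc (n t k : ℝ) : ℝ :=
  (k - 3) / 3 * ((k + 3) * (2 * n + t - 4) - (k ^ 2 - 1) - 3 * (3 * n + 2 * t - 4))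

lemma sExc_three (n t : ℝ) : sExc n t 3 = 0 := by simp [sExc]

lemma sExc_four (n t : ℝ) : sExc n t 4 = (5 * n + t - 31) / 3 := by unfold sExc; ring

lemma sExc_gt (n t k : ℕ) (hn : 7 ≤ n) (ht : 1 ≤ t) (hk : 5 ≤ k) (hkn : k ≤ n) :
    (5 * (n:ℝ) + t - 31) / 3 < sExc n t k := by
  obtain ⟨m, rfl⟩ := Nat.exists_eq_add_of_le hkn
  obtain ⟨j, rfl⟩ := Nat.exists_eq_add_of_le hk
  obtain ⟨l, rfl⟩ := Nat.exists_eq_add_of_le ht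
  have hj : (0:ℝ) ≤ j := by positivity
  have hm : (0:ℝ) ≤ m := by positivity
  have hl : (0:ℝ) ≤ l := by positivity
  have hjm : (2:ℝ) ≤ j + m := by
    have : 2 ≤ j + m := by omega
    exact_mod_cast this
  have key : 0 < (j + 2 : ℝ) * ((j+5:ℝ)^2 + 2 * (j+5) * m + (j+5) * (l+1) - 7 * (j+5) - 3 * m
      - 3 * (l+1) + 1) - (5 * (j + 5) + 5 * m + (l+1) - 31) := by
    have e : (j + 2 : ℝ) * ((j+5:ℝ)^2 + 2 * (j+5) * m + (j+5) * (l+1) - 7 * (j+5) - 3 * m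
      - 3 * (l+1) + 1) - (5 * (j + 5) + 5 * m + (l+1) - 31)
      = j^3 + 6 * j^2 - 9 + j * (-4) + 2 * j^2 * m + 11 * j * m + 9 * m
        + j^2 * l + 4 * j * l + 3 * l := by ring
    rw [e]
    rcases Nat.lt_or_ge j 1 with h | h
    · have : (j:ℝ) = 0 := by exact_mod_cast (by omega : j = 0)
      rw [this] at hjm ⊢
      nlinarith
    · have h1 : (1:ℝ) ≤ j := by exact_mod_cast h
      rcases Nat.lt_or_ge j 2 with h' | h'
      · have : (j:ℝ) = 1 := by exact_mod_cast (by omega : j = 1)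
        rw [this] at hjm ⊢
        nlinarith
      · have h2 : (2:ℝ) ≤ j := by exact_mod_cast h'
        have := mul_nonneg hj hm
        have := mul_nonneg hj hl
        have := mul_nonneg (mul_nonneg hj hj) hm
        have := mul_nonneg (mul_nonneg hj hj) hl
        nlinarith [mul_nonneg hj hj, pow_nonneg hj 3]
  unfold sExc
  push_cast
  nlinarith

namespace BD
variable {V : Type*} [Fintype V] {G : SimpleGraph V} {ι : Type*} [Fintype ι] (D : BD G ι)

/-- All blocks share a common vertex, expressed through projections. -/
def Bouquet : Prop := ∀ B w w', w ∉ D.vs B → w' ∉ D.vs B → D.pr B w = D.pr B w'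

lemma base_sum (hc : G.Connected) (n t : ℕ) (hn : Fintype.card V = n)
    (ht : (Finset.univ.filter (fun B => D.dg B = 2)).card = t) :
    ∑ B, D.base B = (-(4/3) * (t:ℝ)^2 + (4/3) * n * t - (14/3) * t + 3 * (n:ℝ)^2 - 7 * n + 4)
      + ∑ B ∈ Finset.univ.filter (fun B => D.dg B = 2), sExc n t (D.vs B).card := by
  have hd := D.sum_degree' hc
  rw [hn, ht] at hd
  have h : ∀ B, D.base B = (((D.vs B).card : ℝ) - 1) * (3 * n + 2 * t - 4)
      + (if D.dg B = 2 then sExc n t (D.vs B).card + ((8/3) * (2 * n + t - 4)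
        - 2 * (3 * n + 2 * t - 4)) else 0) := by
    intro B
    unfold base
    rw [hd, hn]
    rcases D.dg_spec B with ⟨h1, h2, h3⟩ | ⟨h1, h2, h3⟩
    · rw [h1, h2, h3]; push_cast; simp; ring
    · rw [h1, h3, if_pos rfl]; unfold sExc; push_cast; ring
  rw [Finset.sum_congr rfl fun B _ => h B, Finset.sum_add_distrib, ← Finset.sum_mul, D.count hc, hn,
    ← Finset.sum_filter, Finset.sum_add_distrib, Finset.sum_const, ht, nsmul_eq_mul]
  ring

lemma extra_zero (hb : D.Bouquet) (B : ι) : D.extra B = 0 := by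
  apply Finset.sum_eq_zero
  intro u _
  by_cases h0 : D.dout B u = 0
  · rw [h0, zero_mul]
  obtain ⟨B', hB', hne⟩ := Finset.exists_ne_zero_of_sum_ne_zero h0
  have hB : B ≠ B' := (Finset.ne_of_mem_erase hB').symm
  have hu : u ∈ D.vs B' := by
    by_contra h; exact hne (by simp [h])
  have hcard : 1 < (D.vs B').card := by
    rcases D.dg_spec B' with h | h <;> omega
  obtain ⟨y, hy, hyu⟩ := Finset.exists_mem_ne hcard u
  obtain ⟨z, hz, hzB⟩ : ∃ z ∈ D.vs B', z ∉ D.vs B := by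
    by_contra hcon
    push Not at hcon
    exact hyu (D.inter hB (hcon y hy) hy (hcon u hu) hu)
  have e := D.pr_block B B' hB u hu z hz
  rw [Finset.sum_eq_zero, mul_zero]
  intro w hw
  rw [e, hb B z w hzB (Finset.mem_filter.mp hw).2, D.r_self]

lemma main (hc : G.Connected) (n t : ℕ) (hn : Fintype.card V = n) (h7 : 7 ≤ n) (ht1 : 1 ≤ t)
    (ht : (Finset.univ.filter (fun B => D.dg B = 2)).card = t)
    (hnot : ¬ (D.Bouquet ∧ ∀ B, D.dg B = 2 → (D.vs B).card = 3)) :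
    -(4 / 3) * (t : ℝ) ^ 2 + ((4 / 3) * (n : ℝ) - 13 / 3) * t
        + 3 * (n : ℝ) ^ 2 - (16 / 3) * n - 19 / 3 ≤ degRes G ∧
    (degRes G = -(4 / 3) * (t : ℝ) ^ 2 + ((4 / 3) * (n : ℝ) - 13 / 3) * t
        + 3 * (n : ℝ) ^ 2 - (16 / 3) * n - 19 / 3 ↔
      (D.Bouquet ∧ ∃ B1, D.dg B1 = 2 ∧ (D.vs B1).card = 4 ∧
        ∀ B, D.dg B = 2 → B ≠ B1 → (D.vs B).card = 3)) := by
  have hD := D.degRes_formula hc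
  rw [Finset.sum_add_distrib, D.base_sum hc n t hn ht] at hD
  have hd := D.sum_degree' hc
  rw [hn, ht] at hd
  have hn' : (7:ℝ) ≤ n := by exact_mod_cast h7
  have ht' : (1:ℝ) ≤ t := by exact_mod_cast ht1
  have hex := Finset.sum_nonneg fun B (_ : B ∈ Finset.univ) => D.extra_nonneg B
  have hs : ∀ B, D.dg B = 2 → ((D.vs B).card = 3 ∧ sExc n t (D.vs B).card = 0) ∨
      ((D.vs B).card = 4 ∧ sExc n t (D.vs B).card = (5 * (n:ℝ) + t - 31) / 3) ∨
      (5 ≤ (D.vs B).card ∧ (5 * (n:ℝ) + t - 31) / 3 < sExc n t (D.vs B).card) := by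
    intro B hB
    have h3 : 3 ≤ (D.vs B).card := by rcases D.dg_spec B with h | h <;> omega
    have hle : (D.vs B).card ≤ n := hn ▸ Finset.card_le_univ _
    rcases Nat.lt_or_ge (D.vs B).card 5 with h | h
    · have : (D.vs B).card = 3 ∨ (D.vs B).card = 4 := by omega
      rcases this with h | h
      · left; exact ⟨h, by rw [h]; exact_mod_cast sExc_three _ _⟩
      · right; left; exact ⟨h, by rw [h]; rw [Nat.cast_ofNat, sExc_four]⟩
    · right; right; exact ⟨h, sExc_gt n t _ h7 ht1 h hle⟩
  have hexB : (∀ B, D.dg B = 2 → (D.vs B).card ≤ 4) → ¬ D.Bouquet → ∃ B,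
      (2 / 3) * (4 * (n:ℝ) + 2 * t - 22) ≤ D.extra B ∧ ((D.vs B).card ≤ 3 →
        (4/3) * (2 * (n:ℝ) + t - 9) ≤ D.extra B) := by
    intro h4 hb
    unfold Bouquet at hb
    push Not at hb
    obtain ⟨B, w, w', hw, hw', hne⟩ := hb
    have := D.extra_ge hc B w w' hw hw' hne
    rw [hd, hn] at this
    refine ⟨B, ?_, ?_⟩
    · rcases D.dg_spec B with ⟨h1, h2, h3⟩ | ⟨h1, h2, h3⟩
      · rw [h1, h2] at this; push_cast at this; linarith
      · have h5 : ((D.vs B).card : ℝ) ≤ 4 := by exact_mod_cast h4 B h1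
        rw [h1] at this; push_cast at this; linarith
    · intro h5
      rcases D.dg_spec B with ⟨h1, h2, h3⟩ | ⟨h1, h2, h3⟩
      · rw [h1, h2] at this; push_cast at this; linarith
      · have h5 : ((D.vs B).card : ℝ) ≤ 3 := by exact_mod_cast h5
        rw [h1] at this; push_cast at this; linarith
  by_cases hall : ∀ B, D.dg B = 2 → (D.vs B).card = 3
  · have hnb : ¬ D.Bouquet := fun h => hnot ⟨h, hall⟩
    obtain ⟨B, -, hB⟩ := hexB (fun B h => by rw [hall B h]; norm_num) hnb
    have hB3 : (D.vs B).card ≤ 3 := by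
      rcases D.dg_spec B with h | h
      · omega
      · rw [hall B h.1]
    have hle := Finset.single_le_sum (fun B (_ : B ∈ Finset.univ) => D.extra_nonneg B)
      (Finset.mem_univ B)
    have hz : ∑ B ∈ Finset.univ.filter (fun B => D.dg B = 2), sExc n t (D.vs B).card = 0 := by
      apply Finset.sum_eq_zero
      intro B hB
      have := hall B (Finset.mem_filter.mp hB).2
      rw [this]; exact_mod_cast sExc_three _ _
    have hlt := hB hB3
    rw [hz] at hD
    refine ⟨by nlinarith, ⟨fun h => ?_, ?_⟩⟩
    · exfalso; nlinarith
    · rintro ⟨h, -⟩; exact absurd h hnb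
  · push Not at hall
    obtain ⟨B1, hB1, hc1⟩ := hall
    have hmem : B1 ∈ Finset.univ.filter (fun B => D.dg B = 2) := by simp [hB1]
    have hs0 : ∀ B ∈ (Finset.univ.filter (fun B => D.dg B = 2)).erase B1,
        0 ≤ sExc n t (D.vs B).card := by
      intro B hB
      rcases hs B (Finset.mem_filter.mp (Finset.mem_of_mem_erase hB)).2 with h | h | h <;> nlinarith
    have hs0' := Finset.sum_nonneg hs0
    rw [← Finset.add_sum_erase _ _ hmem] at hD
    have hs1 : (5 * (n:ℝ) + t - 31) / 3 ≤ sExc n t (D.vs B1).card := by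
      rcases hs B1 hB1 with h | h | h
      · exact absurd h.1 hc1
      · exact h.2.ge
      · exact h.2.le
    refine ⟨by nlinarith, ⟨fun h => ?_, ?_⟩⟩
    · have e1 : sExc n t (D.vs B1).card = (5 * (n:ℝ) + t - 31) / 3 := by nlinarith
      have e2 : ∑ B ∈ (Finset.univ.filter (fun B => D.dg B = 2)).erase B1,
        sExc n t (D.vs B).card = 0 := by nlinarith
      have e3 : ∑ B, D.extra B = 0 := by nlinarith
      have f1 : (D.vs B1).card = 4 := by
        rcases hs B1 hB1 with h | h | h
        · exact absurd h.1 hc1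
        · exact h.1
        · linarith [h.2]
      have f2 : ∀ B, D.dg B = 2 → B ≠ B1 → (D.vs B).card = 3 := by
        intro B hB hne
        have := (Finset.sum_eq_zero_iff_of_nonneg hs0).mp e2 B (by simp [hB, hne])
        rcases hs B hB with h | h | h
        · exact h.1
        · nlinarith [h.2]
        · nlinarith [h.2]
      refine ⟨?_, B1, hB1, f1, f2⟩
      by_contra hb
      obtain ⟨B, hB, -⟩ := hexB (fun B h => by
        by_cases hh : B = B1
        · rw [hh, f1]
        · rw [f2 B h hh]; norm_num) hb
      have := (Finset.sum_eq_zero_iff_of_nonneg (fun B _ => D.extra_nonneg B)).mp e3 B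
        (Finset.mem_univ B)
      nlinarith
    · rintro ⟨hb, B2, hB2, hc2, h3⟩
      have e3 : ∑ B, D.extra B = 0 := Finset.sum_eq_zero fun B _ => D.extra_zero hb B
      have h12 : B1 = B2 := by
        by_contra hne
        exact hc1 (h3 B1 hB1 hne)
      subst h12
      have e2 : ∑ B ∈ (Finset.univ.filter (fun B => D.dg B = 2)).erase B1,
          sExc n t (D.vs B).card = 0 := by
        apply Finset.sum_eq_zero
        intro B hB
        rw [h3 B (Finset.mem_filter.mp (Finset.mem_of_mem_erase hB)).2 (Finset.ne_of_mem_erase hB)]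
        exact_mod_cast sExc_three _ _
      have e1 : sExc n t (D.vs B1).card = (5 * (n:ℝ) + t - 31) / 3 := by
        rw [hc2]; rw [Nat.cast_ofNat, sExc_four]
      rw [hD, e1, e2, e3]; ring

end BD
end Optimization

section Hub
open scoped Classical
set_option linter.unusedSectionVars false

namespace BD
variable {V : Type*} [Fintype V] {G : SimpleGraph V} {ι : Type*} [Fintype ι] (D : BD G ι)

lemma two_le_card (B : ι) : 2 ≤ (D.vs B).card := by
  rcases D.dg_spec B with h | h <;> omega

lemma exists_diff {B B' : ι} (h : B ≠ B') : ∃ y ∈ D.vs B, y ∉ D.vs B' := by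
  by_contra hh
  push Not at hh
  obtain ⟨x, hx, y, hy, hxy⟩ := Finset.one_lt_card.mp (D.two_le_card B)
  exact hxy (D.inter h hx (hh x hx) hy (hh y hy))

lemma exists_hub (hc : G.Connected) (hB : D.Bouquet) (hbig : ∀ B, ∃ w, w ∉ D.vs B) (B0 : ι) :
    ∃ z, ∀ B, z ∈ D.vs B := by
  obtain ⟨w0, hw0⟩ := hbig B0
  obtain ⟨z, hz⟩ : ∃ z, z = D.pr B0 w0 := ⟨_, rfl⟩
  have hz0 : z ∈ D.vs B0 := hz ▸ D.pr_mem _ _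
  have s1 : ∀ B', z ∈ D.vs B' → ∀ w, w ∉ D.vs B' → D.pr B' w = z := by
    intro B' hB' w hw
    by_cases e : B' = B0
    · subst e; rw [hz]; exact hB _ _ _ hw hw0
    · obtain ⟨y, hy, hy'⟩ := D.exists_diff (Ne.symm e)
      rw [hB B' w y hw hy', D.pr_block B' B0 e y hy z hz0, D.pr_id _ _ hB']
  have s2 : ∀ B' B3 x, z ∈ D.vs B' → x ∈ D.vs B' → x ∈ D.vs B3 → z ∈ D.vs B3 := by
    intro B' B3 x h1 h2 h3
    by_cases e : B3 = B'
    · rwa [e]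
    · obtain ⟨y, hy, hy'⟩ := D.exists_diff e
      have := s1 B' h1 y hy'
      rw [D.pr_block B' B3 (Ne.symm e) y hy x h3, D.pr_id _ _ h2] at this
      rwa [← this]
  have s3 : ∀ x, ∃ B', z ∈ D.vs B' ∧ x ∈ D.vs B' := by
    intro x
    obtain ⟨p⟩ := hc.preconnected x z
    induction p with
    | nil => exact ⟨B0, hz0, hz0⟩
    | cons h _ ih =>
      obtain ⟨B', h1, h2⟩ := ih hz hz0 s1 s2
      obtain ⟨B3, h3, h4⟩ := D.edge _ _ h
      exact ⟨B3, s2 B' B3 _ h1 h2 h4, h3⟩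
  refine ⟨z, fun B => ?_⟩
  obtain ⟨x, hx⟩ := Finset.card_pos.mp (lt_of_lt_of_le two_pos (D.two_le_card B))
  obtain ⟨B', h1, h2⟩ := s3 x
  exact s2 B' B x h1 h2 hx

lemma adj_of_card_le (B : ι) (h3 : (D.vs B).card ≤ 3) {x y : V} (hx : x ∈ D.vs B)
    (hy : y ∈ D.vs B) (hxy : x ≠ y) : G.Adj x y := by
  have h := D.deg B x hx
  have hs : (Finset.univ.filter (fun v => G.Adj x v ∧ v ∈ D.vs B)) ⊆ (D.vs B).erase x := by
    intro v hv
    rw [Finset.mem_filter] at hv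
    exact Finset.mem_erase.mpr ⟨hv.2.1.ne', hv.2.2⟩
  have he := Finset.eq_of_subset_of_card_le hs (by
    rw [h, Finset.card_erase_of_mem hx]
    rcases D.dg_spec B with h | h <;> omega)
  have : y ∈ (D.vs B).erase x := Finset.mem_erase.mpr ⟨hxy.symm, hy⟩
  rw [← he] at this
  exact (Finset.mem_filter.mp this).2.1

lemma quad (B : ι) (h2 : D.dg B = 2) (h4 : (D.vs B).card = 4) {z : V} (hz : z ∈ D.vs B) :
    ∃ p o q, D.vs B = {z, p, o, q} ∧ z ≠ p ∧ z ≠ o ∧ z ≠ q ∧ p ≠ o ∧ p ≠ q ∧ o ≠ q ∧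
      G.Adj z p ∧ G.Adj z q ∧ ¬ G.Adj z o ∧ G.Adj p o ∧ G.Adj o q ∧ ¬ G.Adj p q := by
  have hdz := D.deg B z hz
  rw [h2, Finset.card_eq_two] at hdz
  obtain ⟨p, q, hpq, hN⟩ := hdz
  have hN' : ∀ v, (G.Adj z v ∧ v ∈ D.vs B) ↔ v = p ∨ v = q := by
    intro v
    have := Finset.ext_iff.mp hN v
    simpa using this
  obtain ⟨hzp, hp⟩ := (hN' p).mpr (Or.inl rfl)
  obtain ⟨hzq, hq⟩ := (hN' q).mpr (Or.inr rfl)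
  have hsub : ({z, p, q} : Finset V) ⊆ D.vs B := by
    intro v hv
    simp only [Finset.mem_insert, Finset.mem_singleton] at hv
    rcases hv with rfl | rfl | rfl <;> assumption
  have hc3 : ({z, p, q} : Finset V).card = 3 := by
    rw [Finset.card_eq_three]; exact ⟨z, p, q, hzp.ne, hzq.ne, hpq, rfl⟩
  have hdiff : (D.vs B \ {z, p, q}).card = 1 := by
    rw [Finset.card_sdiff_of_subset hsub]; omega
  obtain ⟨o, ho⟩ := Finset.card_eq_one.mp hdiff
  have ho' : o ∈ D.vs B \ {z, p, q} := by rw [ho]; simp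
  simp only [Finset.mem_sdiff, Finset.mem_insert, Finset.mem_singleton, not_or] at ho'
  obtain ⟨hoB, hoz, hop, hoq⟩ := ho'
  have hvs : ∀ v, v ∈ D.vs B ↔ v = z ∨ v = p ∨ v = o ∨ v = q := by
    intro v
    constructor
    · intro hv
      by_cases h : v ∈ ({z, p, q} : Finset V)
      · simp only [Finset.mem_insert, Finset.mem_singleton] at h; tauto
      · have : v ∈ D.vs B \ {z, p, q} := Finset.mem_sdiff.mpr ⟨hv, h⟩
        rw [ho, Finset.mem_singleton] at this; tauto
    · rintro (rfl | rfl | rfl | rfl) <;> assumption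
  have hzo : ¬ G.Adj z o := fun h => by
    rcases (hN' o).mp ⟨h, hoB⟩ with h | h <;> tauto
  have hdo := D.deg B o hoB
  have hNo : Finset.univ.filter (fun v => G.Adj o v ∧ v ∈ D.vs B) = {p, q} := by
    apply Finset.eq_of_subset_of_card_le
    · intro v hv
      rw [Finset.mem_filter, hvs] at hv
      obtain ⟨-, h1, h⟩ := hv
      have : v ≠ o := h1.ne'
      have : v ≠ z := by rintro rfl; exact hzo h1.symm
      simp only [Finset.mem_insert, Finset.mem_singleton]; tauto
    · rw [hdo, h2, Finset.card_pair hpq]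
  have hop' : G.Adj o p := by
    have : p ∈ Finset.univ.filter (fun v => G.Adj o v ∧ v ∈ D.vs B) := by rw [hNo]; simp
    exact (Finset.mem_filter.mp this).2.1
  have hoq' : G.Adj o q := by
    have : q ∈ Finset.univ.filter (fun v => G.Adj o v ∧ v ∈ D.vs B) := by rw [hNo]; simp
    exact (Finset.mem_filter.mp this).2.1
  have hpq' : ¬ G.Adj p q := by
    intro h
    have hdp := D.deg B p hp
    have hs : ({z, o, q} : Finset V) ⊆ Finset.univ.filter (fun v => G.Adj p v ∧ v ∈ D.vs B) := by
      intro v hv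
      simp only [Finset.mem_insert, Finset.mem_singleton] at hv
      rw [Finset.mem_filter]
      rcases hv with rfl | rfl | rfl
      · exact ⟨Finset.mem_univ _, hzp.symm, hz⟩
      · exact ⟨Finset.mem_univ _, hop'.symm, hoB⟩
      · exact ⟨Finset.mem_univ _, h, hq⟩
    have := Finset.card_le_card hs
    rw [hdp, h2, Finset.card_eq_three.mpr ⟨z, o, q, Ne.symm hoz, hzq.ne, hoq, rfl⟩] at this
    omega
  refine ⟨p, o, q, ?_, hzp.ne, Ne.symm hoz, hzq.ne, Ne.symm hop, hpq, hoq, hzp, hzq, hzo,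
    hop'.symm, hoq', hpq'⟩
  ext v; rw [hvs]; simp

/-- Building an isomorphism in the presence of a hub. -/
lemma hub_iso {n : ℕ} (hn : Fintype.card V = n) {z : V} (hub : ∀ B, z ∈ D.vs B)
    (Γ : SimpleGraph (Fin n)) (f : ℕ → V) (blk : ℕ → ι)
    (f0 : f 0 = z) (fz : ∀ i, 0 < i → i < n → f i ≠ z)
    (fb : ∀ i, 0 < i → i < n → f i ∈ D.vs (blk i))
    (finj : ∀ i j, 0 < i → i < n → 0 < j → j < n → blk i = blk j → f i = f j → i = j)
    (h0 : ∀ i j : Fin n, i.val = 0 → 0 < j.val → (Γ.Adj i j ↔ G.Adj z (f j)))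
    (h1 : ∀ i j : Fin n, 0 < i.val → 0 < j.val → i ≠ j →
      (Γ.Adj i j ↔ blk i = blk j ∧ G.Adj (f i) (f j))) : Nonempty (G ≃g Γ) := by
  have hblk : ∀ i, 0 < i → i < n → ∀ B, f i ∈ D.vs B → B = blk i := by
    intro i hi hin B hB
    by_contra hne
    exact fz i hi hin (D.inter hne hB (fb i hi hin) (hub B) (hub _))
  have inj : Function.Injective (fun i : Fin n => f i) := by
    intro i j hij
    simp only at hij
    apply Fin.ext
    rcases Nat.eq_zero_or_pos i.val with hi | hi <;> rcases Nat.eq_zero_or_pos j.val with hj | hj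
    · omega
    · rw [hi, f0] at hij; exact absurd hij.symm (fz j hj j.2)
    · rw [hj, f0] at hij; exact absurd hij (fz i hi i.2)
    · exact finj i j hi i.2 hj j.2 (hblk j hj j.2 _ (hij ▸ fb i hi i.2)) hij
  have bij : Function.Bijective (fun i : Fin n => f i) := by
    rw [Fintype.bijective_iff_injective_and_card]
    exact ⟨inj, by simp [hn]⟩
  let e := Equiv.ofBijective _ bij
  have hadj : ∀ i j : Fin n, G.Adj (f i) (f j) ↔ Γ.Adj i j := by
    intro i j
    rcases Nat.eq_zero_or_pos i.val with hi | hi <;> rcases Nat.eq_zero_or_pos j.val with hj | hj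
    · have : i = j := Fin.ext (by omega)
      subst this; simp
    · rw [h0 i j hi hj, hi, f0]
    · rw [Γ.adj_comm, h0 j i hj hi, hj, f0, G.adj_comm]
    · by_cases hij : i = j
      · subst hij; simp
      · rw [h1 i j hi hj hij]
        refine ⟨fun h => ⟨?_, h⟩, fun h => h.2⟩
        obtain ⟨B, hB1, hB2⟩ := D.edge _ _ h
        rw [← hblk i hi i.2 B hB1, ← hblk j hj j.2 B hB2]
  refine ⟨(SimpleGraph.Iso.symm ⟨e, ?_⟩)⟩
  intro i j
  exact hadj i j

lemma enum_finset {α : Type*} [Nonempty α] (s : Finset α) :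
    ∃ e : ℕ → α, (∀ k, k < s.card → e k ∈ s) ∧
      ∀ k l, k < s.card → l < s.card → e k = e l → k = l := by
  let f := s.equivFin.symm
  refine ⟨fun k => if h : k < s.card then (f ⟨k, h⟩ : α) else Classical.arbitrary α, ?_, ?_⟩
  · intro k hk; simp [hk]
  · intro k l hk hl h
    simp only [hk, hl, dif_pos] at h
    simpa using f.injective (Subtype.ext h)

end BD
end Hub

section HubIso
open scoped Classical
set_option linter.unusedSectionVars false

namespace BD
variable {V : Type*} [Fintype V] {G : SimpleGraph V} {ι : Type*} [Fintype ι] (D : BD G ι)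

lemma count_nat (hc : G.Connected) : ∑ B, ((D.vs B).card - 1) + 1 = Fintype.card V := by
  have h := D.count hc
  have : ((∑ B, ((D.vs B).card - 1) + 1 : ℕ) : ℝ) = (Fintype.card V : ℝ) := by
    push_cast
    have h2 : ∀ B, (((D.vs B).card - 1 : ℕ) : ℝ) = ((D.vs B).card : ℝ) - 1 := fun B => by
      rw [Nat.cast_sub (by have := D.two_le_card B; omega)]; simp
    rw [Finset.sum_congr rfl (fun B _ => h2 B), h]; ring
  exact_mod_cast this

lemma tri_mem (B : ι) (h3 : (D.vs B).card = 3) {z : V} (hz : z ∈ D.vs B) :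
    ∃ a b, a ∈ D.vs B ∧ b ∈ D.vs B ∧ a ≠ z ∧ b ≠ z ∧ a ≠ b ∧ G.Adj z a ∧ G.Adj z b ∧ G.Adj a b := by
  have : ((D.vs B).erase z).card = 2 := by rw [Finset.card_erase_of_mem hz, h3]
  obtain ⟨a, b, hab, he⟩ := Finset.card_eq_two.mp this
  have ha : a ∈ (D.vs B).erase z := by rw [he]; simp
  have hb : b ∈ (D.vs B).erase z := by rw [he]; simp
  rw [Finset.mem_erase] at ha hb
  exact ⟨a, b, ha.2, hb.2, ha.1, hb.1, hab, D.adj_of_card_le B h3.le hz ha.2 ha.1.symm,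
    D.adj_of_card_le B h3.le hz hb.2 hb.1.symm, D.adj_of_card_le B h3.le ha.2 hb.2 hab⟩

lemma bri_mem (B : ι) (h2 : D.dg B ≠ 2) {z : V} (hz : z ∈ D.vs B) :
    ∃ c, c ∈ D.vs B ∧ c ≠ z ∧ G.Adj z c := by
  have h2' : (D.vs B).card = 2 := by
    rcases D.dg_spec B with h | h
    · exact h.2.1
    · exact absurd h.1 h2
  have : ((D.vs B).erase z).card = 1 := by rw [Finset.card_erase_of_mem hz, h2']
  obtain ⟨a, he⟩ := Finset.card_eq_one.mp this
  have ha : a ∈ (D.vs B).erase z := by rw [he]; simp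
  rw [Finset.mem_erase] at ha
  exact ⟨a, ha.2, ha.1, D.adj_of_card_le B (by omega) hz ha.2 ha.1.symm⟩

lemma card_bridge (B : ι) (h2 : D.dg B ≠ 2) : (D.vs B).card = 2 := by
  rcases D.dg_spec B with h | h
  · exact h.2.1
  · exact absurd h.1 h2

lemma iso_G0 (hc : G.Connected) (n t : ℕ) (hn : Fintype.card V = n)
    (ht : (Finset.univ.filter (fun B => D.dg B = 2)).card = t) {z : V} (hub : ∀ B, z ∈ D.vs B)
    (B0 : ι) (h3 : ∀ B, D.dg B = 2 → (D.vs B).card = 3) : Nonempty (G ≃g G0 n t) := by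
  haveI : Nonempty V := ⟨z⟩
  haveI : Nonempty ι := ⟨B0⟩
  obtain ⟨e, he, hei⟩ := enum_finset (Finset.univ.filter (fun B => D.dg B = 2))
  obtain ⟨e', he', hei'⟩ := enum_finset (Finset.univ.filter (fun B => D.dg B ≠ 2))
  rw [ht] at he hei
  obtain ⟨m, hm⟩ : ∃ m, m = (Finset.univ.filter (fun B => D.dg B ≠ 2)).card := ⟨_, rfl⟩
  rw [← hm] at he' hei'
  simp only [Finset.mem_filter, Finset.mem_univ, true_and] at he he'
  have hnm : n = 1 + 2 * t + m := by
    rw [← hn, ← D.count_nat hc, ← Finset.sum_filter_add_sum_filter_not _ (fun B => D.dg B = 2),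
      Finset.sum_congr rfl (g := fun _ => 2), Finset.sum_congr (s₁ := Finset.univ.filter
        (fun B => ¬ D.dg B = 2)) rfl (g := fun _ => 1)]
    · simp only [Finset.sum_const, smul_eq_mul, ht, mul_one]
      rw [← hm]; omega
    · intro B hB
      rw [D.card_bridge B (Finset.mem_filter.mp hB).2]
    · intro B hB
      rw [h3 B (Finset.mem_filter.mp hB).2]
  have htri : ∀ k, k < t → ∃ a b, a ∈ D.vs (e k) ∧ b ∈ D.vs (e k) ∧ a ≠ z ∧ b ≠ z ∧ a ≠ b ∧
      G.Adj z a ∧ G.Adj z b ∧ G.Adj a b := fun k hk => D.tri_mem _ (h3 _ (he k hk)) (hub _)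
  have hbri : ∀ k, k < m → ∃ c, c ∈ D.vs (e' k) ∧ c ≠ z ∧ G.Adj z c :=
    fun k hk => D.bri_mem _ (he' k hk) (hub _)
  choose! a b haB hbB haz hbz hab hza hzb haab using htri
  choose! c hcB hcz hzc using hbri
  have hee : ∀ k l, k < t → l < m → e k ≠ e' l := fun k l hk hl h => he' l hl (h ▸ he k hk)
  let f : ℕ → V := fun i => if i = 0 then z else if i ≤ 2 * t then
    (if i % 2 = 1 then a ((i-1)/2) else b ((i-1)/2)) else c (i - 2 * t - 1)
  let blk : ℕ → ι := fun i => if i ≤ 2 * t then e ((i-1)/2) else e' (i - 2 * t - 1)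
  have cls : ∀ i, 0 < i → i < n → (∃ k, k < t ∧ i = 2 * k + 1 ∧ f i = a k ∧ blk i = e k) ∨
      (∃ k, k < t ∧ i = 2 * k + 2 ∧ f i = b k ∧ blk i = e k) ∨
      (∃ k, k < m ∧ i = 2 * t + 1 + k ∧ f i = c k ∧ blk i = e' k) := by
    intro i hi hin
    by_cases h1 : i ≤ 2 * t
    · by_cases h2 : i % 2 = 1
      · left; exact ⟨(i-1)/2, by omega, by omega, by simp [f, h1, h2, hi.ne'], by simp [blk, h1]⟩
      · right; left
        exact ⟨(i-1)/2, by omega, by omega, by simp [f, h1, h2, hi.ne'], by simp [blk, h1]⟩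
    · right; right
      exact ⟨i - 2*t - 1, by omega, by omega, by simp [f, h1, hi.ne'], by simp [blk, h1]⟩
  have f0 : f 0 = z := by simp [f]
  clear_value f blk
  refine D.hub_iso hn hub (G0 n t) f blk f0 ?_ ?_ ?_ ?_ ?_
  · intro i hi hin
    rcases cls i hi hin with ⟨k, hk, -, h, -⟩ | ⟨k, hk, -, h, -⟩ | ⟨k, hk, -, h, -⟩ <;> rw [h]
    exacts [haz k hk, hbz k hk, hcz k hk]
  · intro i hi hin
    rcases cls i hi hin with ⟨k, hk, -, h, h'⟩ | ⟨k, hk, -, h, h'⟩ | ⟨k, hk, -, h, h'⟩ <;> rw [h, h']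
    exacts [haB k hk, hbB k hk, hcB k hk]
  · intro i j hi hin hj hjn hb hf
    rcases cls i hi hin with ⟨k, hk, hik, h, h'⟩ | ⟨k, hk, hik, h, h'⟩ | ⟨k, hk, hik, h, h'⟩ <;>
    rcases cls j hj hjn with ⟨l, hl, hjl, g, g'⟩ | ⟨l, hl, hjl, g, g'⟩ | ⟨l, hl, hjl, g, g'⟩ <;>
    rw [h', g'] at hb <;> rw [h, g] at hf <;>
    first
    | exact absurd hb (hee _ _ hk hl)
    | exact absurd hb.symm (hee _ _ hl hk)
    | (have := hei _ _ hk hl hb; subst this; first | omega | exact absurd hf (hab _ hk) |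
        exact absurd hf.symm (hab _ hk))
    | (have := hei' _ _ hk hl hb; omega)
  · intro i j hi hj
    have : G.Adj z (f j) := by
      rcases cls j hj j.2 with ⟨k, hk, -, h, -⟩ | ⟨k, hk, -, h, -⟩ | ⟨k, hk, -, h, -⟩ <;> rw [h]
      exacts [hza k hk, hzb k hk, hzc k hk]
    simp only [this, iff_true, G0, SimpleGraph.fromRel_adj]
    refine ⟨fun h => by rw [h] at hi; omega, Or.inl (Or.inl hi)⟩
  · intro i j hi hj hij
    have hij' : i.val ≠ j.val := fun h => hij (Fin.ext h)
    simp only [G0, SimpleGraph.fromRel_adj, Nat.odd_iff]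
    rcases cls i hi i.2 with ⟨k, hk, hik, h, h'⟩ | ⟨k, hk, hik, h, h'⟩ | ⟨k, hk, hik, h, h'⟩ <;>
    rcases cls j hj j.2 with ⟨l, hl, hjl, g, g'⟩ | ⟨l, hl, hjl, g, g'⟩ | ⟨l, hl, hjl, g, g'⟩ <;>
    rw [h', g', h, g] <;>
    constructor <;> intro H <;>
    first
    | (exfalso; omega)
    | (have hkl : k = l := by omega
       subst hkl; first | exact ⟨rfl, haab _ hk⟩ | exact ⟨rfl, (haab _ hk).symm⟩)
    | exact absurd H.1 (hee _ _ hk hl)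
    | exact absurd H.1.symm (hee _ _ hl hk)
    | (exfalso; have := hei' _ _ hk hl H.1; omega)
    | (have := hei _ _ hk hl H.1; subst this; first | (exfalso; omega) | exact ⟨hij, by omega⟩)

end BD
end HubIso

section HubIsoFive
open scoped Classical
set_option linter.unusedSectionVars false

namespace BD
variable {V : Type*} [Fintype V] {G : SimpleGraph V} {ι : Type*} [Fintype ι] (D : BD G ι)

lemma iso_G5 (hc : G.Connected) (n t : ℕ) (hn : Fintype.card V = n)
    (ht : (Finset.univ.filter (fun B => D.dg B = 2)).card = t) {z : V} (hub : ∀ B, z ∈ D.vs B)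
    (B1 : ι) (hB1 : D.dg B1 = 2) (hB4 : (D.vs B1).card = 4)
    (h3 : ∀ B, D.dg B = 2 → B ≠ B1 → (D.vs B).card = 3) : Nonempty (G ≃g G5g n t) := by
  have hneV : Nonempty V := ⟨z⟩
  have hneI : Nonempty ι := ⟨B1⟩
  have hB1m : B1 ∈ Finset.univ.filter (fun B => D.dg B = 2) := by simp [hB1]
  have ht1 : 1 ≤ t := by rw [← ht]; exact Finset.card_pos.mpr ⟨B1, hB1m⟩
  obtain ⟨T, rfl⟩ : ∃ T, t = T + 1 := ⟨t - 1, by omega⟩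
  have hT : ((Finset.univ.filter (fun B => D.dg B = 2)).erase B1).card = T := by
    rw [Finset.card_erase_of_mem hB1m, ht]; rfl
  obtain ⟨e, he, hei⟩ := enum_finset ((Finset.univ.filter (fun B => D.dg B = 2)).erase B1)
  obtain ⟨e', he', hei'⟩ := enum_finset (Finset.univ.filter (fun B => D.dg B ≠ 2))
  rw [hT] at he hei
  obtain ⟨m, hm⟩ : ∃ m, m = (Finset.univ.filter (fun B => D.dg B ≠ 2)).card := ⟨_, rfl⟩
  rw [← hm] at he' hei'
  simp only [Finset.mem_filter, Finset.mem_univ, true_and, Finset.mem_erase] at he he'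
  have hnm : n = 4 + 2 * T + m := by
    rw [← hn, ← D.count_nat hc, ← Finset.sum_filter_add_sum_filter_not _ (fun B => D.dg B = 2),
      ← Finset.sum_erase_add _ _ hB1m, hB4,
      Finset.sum_congr rfl (g := fun _ => 2), Finset.sum_congr (s₁ := Finset.univ.filter
        (fun B => ¬ D.dg B = 2)) rfl (g := fun _ => 1)]
    · simp only [Finset.sum_const, smul_eq_mul, hT, mul_one]
      rw [← hm]; omega
    · intro B hB
      rw [D.card_bridge B (Finset.mem_filter.mp hB).2]
    · intro B hB
      rw [Finset.mem_erase, Finset.mem_filter] at hB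
      rw [h3 B hB.2.2 hB.1]
  have htri : ∀ k, k < T → ∃ a b, a ∈ D.vs (e k) ∧ b ∈ D.vs (e k) ∧ a ≠ z ∧ b ≠ z ∧ a ≠ b ∧
      G.Adj z a ∧ G.Adj z b ∧ G.Adj a b :=
    fun k hk => D.tri_mem _ (h3 _ (he k hk).2 (he k hk).1) (hub _)
  have hbri : ∀ k, k < m → ∃ c, c ∈ D.vs (e' k) ∧ c ≠ z ∧ G.Adj z c :=
    fun k hk => D.bri_mem _ (he' k hk) (hub _)
  choose! a b haB hbB haz hbz hab hza hzb haab using htri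
  choose! c hcB hcz hzc using hbri
  obtain ⟨p, o, q, hvs, zp, zo, zq, po, pq, oq, azp, azq, nzo, apo, aoq, npq⟩ :=
    D.quad B1 hB1 hB4 (hub B1)
  have hpB : p ∈ D.vs B1 := by rw [hvs]; simp
  have hoB : o ∈ D.vs B1 := by rw [hvs]; simp
  have hqB : q ∈ D.vs B1 := by rw [hvs]; simp
  clear hvs
  have hee : ∀ k l, k < T → l < m → e k ≠ e' l := fun k l hk hl h => he' l hl (h ▸ (he k hk).2)
  have hee1 : ∀ k, k < T → e k ≠ B1 := fun k hk => (he k hk).1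
  have hee2 : ∀ k, k < m → e' k ≠ B1 := fun k hk h => he' k hk (h ▸ hB1)
  let f : ℕ → V := fun i => if i = 0 then z else if i ≤ 2 * T then
    (if i % 2 = 1 then a ((i-1)/2) else b ((i-1)/2)) else
    if i = 2 * T + 1 then p else if i = 2 * T + 2 then o else if i = 2 * T + 3 then q else
      c (i - 2 * T - 4)
  let blk : ℕ → ι := fun i => if i ≤ 2 * T then e ((i-1)/2) else
    if i ≤ 2 * T + 3 then B1 else e' (i - 2 * T - 4)
  have cls : ∀ i, 0 < i → i < n → (∃ k, k < T ∧ i = 2 * k + 1 ∧ f i = a k ∧ blk i = e k) ∨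
      (∃ k, k < T ∧ i = 2 * k + 2 ∧ f i = b k ∧ blk i = e k) ∨
      (∃ k, k < m ∧ i = 2 * T + 4 + k ∧ f i = c k ∧ blk i = e' k) ∨
      (i = 2 * T + 1 ∧ f i = p ∧ blk i = B1) ∨ (i = 2 * T + 2 ∧ f i = o ∧ blk i = B1) ∨
      (i = 2 * T + 3 ∧ f i = q ∧ blk i = B1) := by
    intro i hi hin
    by_cases h1 : i ≤ 2 * T
    · by_cases h2 : i % 2 = 1
      · left; exact ⟨(i-1)/2, by omega, by omega, by simp [f, h1, h2, hi.ne'], by simp [blk, h1]⟩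
      · right; left
        exact ⟨(i-1)/2, by omega, by omega, by simp [f, h1, h2, hi.ne'], by simp [blk, h1]⟩
    · right; right
      by_cases h2 : i ≤ 2 * T + 3
      · right
        have : i = 2 * T + 1 ∨ i = 2 * T + 2 ∨ i = 2 * T + 3 := by omega
        rcases this with rfl | rfl | rfl
        · left; simp [f, blk]
        · right; left; simp [f, blk]
        · right; right; simp [f, blk]
      · left
        have e1 : i ≠ 2 * T + 1 := by omega
        have e2 : i ≠ 2 * T + 2 := by omega
        have e3 : i ≠ 2 * T + 3 := by omega
        exact ⟨i - 2*T - 4, by omega, by omega, by simp [f, h1, hi.ne', e1, e2, e3],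
          by simp [blk, h1, h2]⟩
  have f0 : f 0 = z := by simp [f]
  clear_value f blk
  refine D.hub_iso hn hub (G5g n (T+1)) f blk f0 ?_ ?_ ?_ ?_ ?_
  · intro i hi hin
    rcases cls i hi hin with ⟨k, hk, -, h, -⟩ | ⟨k, hk, -, h, -⟩ | ⟨k, hk, -, h, -⟩ |
      ⟨-, h, -⟩ | ⟨-, h, -⟩ | ⟨-, h, -⟩ <;> rw [h]
    exacts [haz k hk, hbz k hk, hcz k hk, zp.symm, zo.symm, zq.symm]
  · intro i hi hin
    rcases cls i hi hin with ⟨k, hk, -, h, h'⟩ | ⟨k, hk, -, h, h'⟩ | ⟨k, hk, -, h, h'⟩ |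
      ⟨-, h, h'⟩ | ⟨-, h, h'⟩ | ⟨-, h, h'⟩ <;> rw [h, h']
    exacts [haB k hk, hbB k hk, hcB k hk, hpB, hoB, hqB]
  · intro i j hi hin hj hjn hb hf
    rcases cls i hi hin with ⟨k, hk, hik, h, h'⟩ | ⟨k, hk, hik, h, h'⟩ | ⟨k, hk, hik, h, h'⟩ |
      ⟨hik, h, h'⟩ | ⟨hik, h, h'⟩ | ⟨hik, h, h'⟩ <;>
    rcases cls j hj hjn with ⟨l, hl, hjl, g, g'⟩ | ⟨l, hl, hjl, g, g'⟩ | ⟨l, hl, hjl, g, g'⟩ |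
      ⟨hjl, g, g'⟩ | ⟨hjl, g, g'⟩ | ⟨hjl, g, g'⟩ <;>
    rw [h', g'] at hb <;> rw [h, g] at hf <;>
    first
    | omega
    | exact absurd hb (hee _ _ hk hl)
    | exact absurd hb.symm (hee _ _ hl hk)
    | exact absurd hb (hee1 _ hk)
    | exact absurd hb.symm (hee1 _ hl)
    | exact absurd hb (hee2 _ hk)
    | exact absurd hb.symm (hee2 _ hl)
    | exact absurd hf po
    | exact absurd hf.symm po
    | exact absurd hf pq
    | exact absurd hf.symm pq
    | exact absurd hf oq
    | exact absurd hf.symm oq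
    | (have := hei _ _ hk hl hb; subst this; first | omega | exact absurd hf (hab _ hk) |
        exact absurd hf.symm (hab _ hk))
    | (have := hei' _ _ hk hl hb; omega)
  · intro i j hi hj
    have hne : i ≠ j := fun h => by rw [h] at hi; omega
    simp only [G5g, SimpleGraph.fromRel_adj]
    by_cases hjo : j.val = 2 * T + 2
    · rcases cls j hj j.2 with ⟨k, hk, hh, h, -⟩ | ⟨k, hk, hh, h, -⟩ | ⟨k, hk, hh, h, -⟩ |
        ⟨hh, h, -⟩ | ⟨hh, h, -⟩ | ⟨hh, h, -⟩ <;> try omega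
      rw [h]
      constructor
      · intro H; exfalso; omega
      · intro H; exact absurd H nzo
    · have : G.Adj z (f j) := by
        rcases cls j hj j.2 with ⟨k, hk, hh, h, -⟩ | ⟨k, hk, hh, h, -⟩ | ⟨k, hk, hh, h, -⟩ |
          ⟨hh, h, -⟩ | ⟨hh, h, -⟩ | ⟨hh, h, -⟩ <;> rw [h]
        exacts [hza k hk, hzb k hk, hzc k hk, azp, absurd hh hjo, azq]
      simp only [this, iff_true]
      exact ⟨hne, Or.inl (Or.inl ⟨hi, by omega⟩)⟩
  · intro i j hi hj hij
    have hij' : i.val ≠ j.val := fun h => hij (Fin.ext h)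
    simp only [G5g, SimpleGraph.fromRel_adj, Nat.odd_iff]
    rcases cls i hi i.2 with ⟨k, hk, hik, h, h'⟩ | ⟨k, hk, hik, h, h'⟩ | ⟨k, hk, hik, h, h'⟩ |
      ⟨hik, h, h'⟩ | ⟨hik, h, h'⟩ | ⟨hik, h, h'⟩ <;>
    rcases cls j hj j.2 with ⟨l, hl, hjl, g, g'⟩ | ⟨l, hl, hjl, g, g'⟩ | ⟨l, hl, hjl, g, g'⟩ |
      ⟨hjl, g, g'⟩ | ⟨hjl, g, g'⟩ | ⟨hjl, g, g'⟩ <;>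
    rw [h', g', h, g] <;>
    constructor <;> intro H <;>
    first
    | (exfalso; omega)
    | exact ⟨rfl, apo⟩
    | exact ⟨rfl, apo.symm⟩
    | exact ⟨rfl, aoq⟩
    | exact ⟨rfl, aoq.symm⟩
    | exact absurd H.2 npq
    | exact absurd H.2.symm npq
    | (have hkl : k = l := by omega
       subst hkl; first | exact ⟨rfl, haab _ hk⟩ | exact ⟨rfl, (haab _ hk).symm⟩)
    | exact absurd H.1 (hee _ _ hk hl)
    | exact absurd H.1.symm (hee _ _ hl hk)
    | exact absurd H.1 (hee1 _ hk)
    | exact absurd H.1.symm (hee1 _ hl)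
    | exact absurd H.1 (hee2 _ hk)
    | exact absurd H.1.symm (hee2 _ hl)
    | (exfalso; have := hei' _ _ hk hl H.1; omega)
    | (have := hei _ _ hk hl H.1; subst this; first | (exfalso; omega) | exact ⟨hij, by omega⟩)
    | exact ⟨hij, by omega⟩

lemma of_shape {z o p q : V} (hzo : z ≠ o) (hpq : p ≠ q)
    (hz : ∀ w, w ≠ z → w ≠ o → G.Adj z w) (nzo : ¬ G.Adj z o)
    (ho : ∀ w, G.Adj o w ↔ w = p ∨ w = q) :
    D.Bouquet ∧ ∃ B1, D.dg B1 = 2 ∧ (D.vs B1).card = 4 ∧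
        ∀ B, D.dg B = 2 → B ≠ B1 → (D.vs B).card = 3 := by
  have hop : G.Adj o p := (ho p).mpr (Or.inl rfl)
  have hoq : G.Adj o q := (ho q).mpr (Or.inr rfl)
  have hpz : p ≠ z := by rintro rfl; exact nzo hop.symm
  have hqz : q ≠ z := by rintro rfl; exact nzo hoq.symm
  have hzp : G.Adj z p := hz p hpz hop.ne'
  have hzq : G.Adj z q := hz q hqz hoq.ne'
  have edge_o : ∀ B p q, G.Adj o p → G.Adj o q → G.Adj z p → G.Adj z q → p ≠ q →
      o ∈ D.vs B → p ∈ D.vs B → z ∈ D.vs B := by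
    intro B p q hop hoq hzp hzq hpq hoB hpB
    rcases D.adj_pr hzp B with h | h
    · rw [D.pr_id B p hpB] at h
      by_cases hqB : q ∈ D.vs B
      · rcases D.adj_pr hzq B with h' | h'
        · rw [D.pr_id B q hqB, h] at h'; exact absurd h' hpq
        · exact h'.1
      · rcases D.adj_pr hzq B with h' | h'
        · rcases D.adj_pr hoq B with h2 | h2
          · rw [D.pr_id B o hoB] at h2
            rw [h, ← h2] at h'
            exact absurd h'.symm hop.ne
          · exact absurd h2.2 hqB
        · exact h'.1
    · exact h.1
  have hub : ∀ B, z ∈ D.vs B := by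
    intro B
    obtain ⟨x, hx⟩ := Finset.card_pos.mp (lt_of_lt_of_le two_pos (D.two_le_card B))
    have hd := D.deg B x hx
    obtain ⟨y, hy⟩ := Finset.card_pos.mp (by rw [hd]; exact D.dg_pos B)
    obtain ⟨-, hxy, hyB⟩ := Finset.mem_filter.mp hy
    have eo : ∀ y, G.Adj o y → o ∈ D.vs B → y ∈ D.vs B → z ∈ D.vs B := by
      intro y hy hoB hyB
      rcases (ho y).mp hy with rfl | rfl
      · exact edge_o B y q hop hoq hzp hzq hpq hoB hyB
      · exact edge_o B y p hoq hop hzq hzp hpq.symm hoB hyB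
    by_cases hxo : x = o
    · subst hxo; exact eo y hxy hx hyB
    by_cases hyo : y = o
    · subst hyo; exact eo x hxy.symm hyB hx
    by_cases hxz : x = z
    · rwa [← hxz]
    by_cases hyz : y = z
    · rwa [← hyz]
    rcases D.adj_pr (hz x hxz hxo) B with h | h
    · rcases D.adj_pr (hz y hyz hyo) B with h' | h'
      · rw [h, D.pr_id B x hx, D.pr_id B y hyB] at h'
        exact absurd h' hxy.ne
      · exact h'.1
    · exact h.1
  have off : ∀ B w, w ∉ D.vs B → D.pr B w = z := by
    intro B
    have h1 : ∀ w, w ∉ D.vs B → w ≠ o → D.pr B w = z := by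
      intro w hw hwo
      have hwz : w ≠ z := by rintro rfl; exact hw (hub B)
      rcases D.adj_pr (hz w hwz hwo) B with h | h
      · rw [← h, D.pr_id B z (hub B)]
      · exact absurd h.2 hw
    intro w hw
    by_cases hwo : w = o
    · subst hwo
      have hp : D.pr B w = D.pr B p := (D.adj_pr hop B).resolve_right fun h => hw h.1
      have hq : D.pr B w = D.pr B q := (D.adj_pr hoq B).resolve_right fun h => hw h.1
      by_cases hpB : p ∈ D.vs B
      · by_cases hqB : q ∈ D.vs B
        · rw [hp, D.pr_id B p hpB, D.pr_id B q hqB] at hq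
          exact absurd hq hpq
        · rw [hq]; exact h1 q hqB hoq.ne'
      · rw [hp]; exact h1 p hpB hop.ne'
    · exact h1 w hw hwo
  refine ⟨fun B w w' hw hw' => by rw [off B w hw, off B w' hw'], ?_⟩
  obtain ⟨B1, hoB, hpB⟩ := D.edge _ _ hop
  have hcard3 : ({z, o, p} : Finset V).card = 3 :=
    Finset.card_eq_three.mpr ⟨z, o, p, hzo, hpz.symm, hop.ne, rfl⟩
  have hge : 3 ≤ (D.vs B1).card := by
    rw [← hcard3]
    apply Finset.card_le_card
    intro v hv
    simp only [Finset.mem_insert, Finset.mem_singleton] at hv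
    rcases hv with rfl | rfl | rfl
    exacts [hub B1, hoB, hpB]
  have hd1 : D.dg B1 = 2 := by
    rcases D.dg_spec B1 with h | h
    · omega
    · exact h.1
  refine ⟨B1, hd1, ?_, ?_⟩
  · have hd := D.deg B1 z (hub B1)
    have : D.vs B1 = insert z (insert o (Finset.univ.filter
        (fun v => G.Adj z v ∧ v ∈ D.vs B1))) := by
      ext v
      simp only [Finset.mem_insert, Finset.mem_filter, Finset.mem_univ, true_and]
      constructor
      · intro hv
        by_cases h1 : v = z
        · exact Or.inl h1
        by_cases h2 : v = o
        · exact Or.inr (Or.inl h2)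
        · exact Or.inr (Or.inr ⟨hz v h1 h2, hv⟩)
      · rintro (rfl | rfl | h)
        exacts [hub B1, hoB, h.2]
    rw [this, Finset.card_insert_of_notMem, Finset.card_insert_of_notMem, hd, hd1]
    · simp [nzo]
    · simp [hzo]
  · intro B hB hne
    have hoB' : o ∉ D.vs B := fun h => hzo (D.inter hne (hub B) (hub B1) h hoB)
    have hd := D.deg B z (hub B)
    have : D.vs B = insert z (Finset.univ.filter (fun v => G.Adj z v ∧ v ∈ D.vs B)) := by
      ext v
      simp only [Finset.mem_insert, Finset.mem_filter, Finset.mem_univ, true_and]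
      constructor
      · intro hv
        by_cases h1 : v = z
        · exact Or.inl h1
        · exact Or.inr ⟨hz v h1 (fun h => hoB' (h ▸ hv)), hv⟩
      · rintro (rfl | h)
        exacts [hub B, h.2]
    rw [this, Finset.card_insert_of_notMem, hd, hB]
    simp

lemma of_iso_G5 (hc : G.Connected) (n t : ℕ) (hn : Fintype.card V = n) (ht1 : 1 ≤ t)
    (ht : (Finset.univ.filter (fun B => D.dg B = 2)).card = t) (h : Nonempty (G ≃g G5g n t)) :
    D.Bouquet ∧ ∃ B1, D.dg B1 = 2 ∧ (D.vs B1).card = 4 ∧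
        ∀ B, D.dg B = 2 → B ≠ B1 → (D.vs B).card = 3 := by
  obtain ⟨φ⟩ := h
  have hcount := D.count_nat hc
  rw [hn, ← Finset.sum_filter_add_sum_filter_not _ (fun B => D.dg B = 2)] at hcount
  have hc1 : 2 * t ≤ ∑ B ∈ Finset.univ.filter (fun B => D.dg B = 2), ((D.vs B).card - 1) := by
    rw [← ht, mul_comm, ← smul_eq_mul]
    apply Finset.card_nsmul_le_sum
    intro B hB
    rcases D.dg_spec B with h | h
    · rw [(Finset.mem_filter.mp hB).2] at h; omega
    · omega
  have adj : ∀ i j : Fin n, G.Adj (φ.symm i) (φ.symm j) ↔ (G5g n t).Adj i j := fun i j => by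
    rw [← φ.map_adj_iff]; simp
  have hlt : 2 * t + 1 < n := by
    by_contra hcon
    have hn' : n = 2 * t + 1 := by omega
    have hz0 : ∑ B ∈ Finset.univ.filter (fun B => ¬ D.dg B = 2), ((D.vs B).card - 1) = 0 := by omega
    have hall : ∀ B, D.dg B = 2 := by
      intro B
      by_contra hB
      have := Finset.sum_eq_zero_iff.mp hz0 B (by simp [hB])
      have := D.two_le_card B
      omega
    obtain ⟨o, ho⟩ : ∃ o : Fin n, o.val = 2 * t := ⟨⟨2 * t, by omega⟩, rfl⟩
    obtain ⟨p, hp⟩ : ∃ p : Fin n, p.val = 2 * t - 1 := ⟨⟨2 * t - 1, by omega⟩, rfl⟩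
    have hop : (G5g n t).Adj o p := by
      simp only [G5g, SimpleGraph.fromRel_adj]
      exact ⟨fun h => by rw [h] at ho; omega, by right; omega⟩
    obtain ⟨B, h1, h2⟩ := D.edge _ _ ((adj o p).mpr hop)
    have hd := D.deg B _ h1
    rw [hall B] at hd
    have : (Finset.univ.filter (fun v => G.Adj (φ.symm o) v ∧ v ∈ D.vs B)) ⊆ {φ.symm p} := by
      intro v hv
      obtain ⟨-, h3, -⟩ := Finset.mem_filter.mp hv
      obtain ⟨w, rfl⟩ := φ.symm.surjective v
      rw [adj] at h3
      simp only [G5g, SimpleGraph.fromRel_adj, Nat.odd_iff] at h3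
      have : w = p := Fin.ext (by have := w.2; omega)
      simp [this]
    have := Finset.card_le_card this
    rw [hd, Finset.card_singleton] at this
    omega
  obtain ⟨z, hz⟩ : ∃ z : Fin n, z.val = 0 := ⟨⟨0, by omega⟩, rfl⟩
  obtain ⟨o, ho⟩ : ∃ o : Fin n, o.val = 2 * t := ⟨⟨2 * t, by omega⟩, rfl⟩
  obtain ⟨p, hp⟩ : ∃ p : Fin n, p.val = 2 * t - 1 := ⟨⟨2 * t - 1, by omega⟩, rfl⟩
  obtain ⟨q, hq⟩ : ∃ q : Fin n, q.val = 2 * t + 1 := ⟨⟨2 * t + 1, by omega⟩, rfl⟩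
  refine D.of_shape (z := φ.symm z) (o := φ.symm o) (p := φ.symm p) (q := φ.symm q) ?_ ?_ ?_ ?_ ?_
  · rw [Ne, φ.symm.injective.eq_iff, Fin.ext_iff]; omega
  · rw [Ne, φ.symm.injective.eq_iff, Fin.ext_iff]; omega
  · intro w
    obtain ⟨w, rfl⟩ := φ.symm.surjective w
    rw [Ne, φ.symm.injective.eq_iff, Ne, φ.symm.injective.eq_iff, adj, Fin.ext_iff, Fin.ext_iff]
    simp only [G5g, SimpleGraph.fromRel_adj, Ne, Fin.ext_iff]
    omega
  · rw [adj]
    simp only [G5g, SimpleGraph.fromRel_adj, Ne, Fin.ext_iff, Nat.odd_iff]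
    omega
  · intro w
    obtain ⟨w, rfl⟩ := φ.symm.surjective w
    rw [φ.symm.injective.eq_iff, φ.symm.injective.eq_iff, adj, Fin.ext_iff, Fin.ext_iff]
    simp only [G5g, SimpleGraph.fromRel_adj, Ne, Fin.ext_iff, Nat.odd_iff]
    omega

/-- The final statement, given block data. -/
lemma final (hc : G.Connected) (n t : ℕ) (hn : Fintype.card V = n) (h7 : 7 ≤ n) (ht1 : 1 ≤ t)
    (ht : (Finset.univ.filter (fun B => D.dg B = 2)).card = t)
    (hnot : ¬ Nonempty (G ≃g G0 n t)) :
    -(4 / 3) * (t : ℝ) ^ 2 + ((4 / 3) * (n : ℝ) - 13 / 3) * t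
        + 3 * (n : ℝ) ^ 2 - (16 / 3) * n - 19 / 3 ≤ degRes G ∧
    (degRes G = -(4 / 3) * (t : ℝ) ^ 2 + ((4 / 3) * (n : ℝ) - 13 / 3) * t
        + 3 * (n : ℝ) ^ 2 - (16 / 3) * n - 19 / 3 ↔ Nonempty (G ≃g G5g n t)) := by
  have hubE : ∀ B0 : ι, D.Bouquet → (∀ B, D.dg B = 2 → (D.vs B).card ≤ 4) →
      ∃ z, ∀ B, z ∈ D.vs B := by
    intro B0 hb h4
    refine D.exists_hub hc hb (fun B => ?_) B0
    by_contra hcon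
    push Not at hcon
    have h1 : D.vs B = Finset.univ := Finset.eq_univ_iff_forall.mpr hcon
    have h2 : (D.vs B).card = n := by rw [h1, Finset.card_univ, hn]
    by_cases h : D.dg B = 2
    · have := h4 B h; omega
    · have := D.card_bridge B h; omega
  have hmain := D.main hc n t hn h7 ht1 ht (by
    rintro ⟨hb, h3⟩
    obtain ⟨B0, -⟩ := Finset.card_pos.mp (by rw [ht]; exact ht1)
    obtain ⟨z, hz⟩ := hubE B0 hb (fun B hB => by rw [h3 B hB]; omega)
    exact hnot (D.iso_G0 hc n t hn ht hz B0 h3))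
  refine ⟨hmain.1, hmain.2.trans ⟨?_, D.of_iso_G5 hc n t hn ht1 ht⟩⟩
  rintro ⟨hb, B1, h2, h4, h3⟩
  obtain ⟨z, hz⟩ := hubE B1 hb (fun B hB => by
    by_cases e : B = B1
    · rw [e, h4]
    · rw [h3 B hB e]; omega)
  exact D.iso_G5 hc n t hn ht hz B1 h2 h4 h3

end BD
end HubIsoFive

section Cactus
open scoped Classical
set_option linter.unusedSectionVars false

lemma isCycleSubgraph_walk {V : Type*} {G : SimpleGraph V} {u : V} {p : G.Walk u u}
    (hp : p.IsCycle) : IsCycleSubgraph p.toSubgraph := by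
  refine ⟨SimpleGraph.Subgraph.connected_iff'.mp p.toSubgraph_connected, fun v hv => ?_⟩
  rw [p.verts_toSubgraph] at hv
  exact hp.ncard_neighborSet_toSubgraph_eq_two hv

lemma reach_of_conn {V : Type*} {G : SimpleGraph V} {H : G.Subgraph} (hH : H.coe.Connected)
    {K : SimpleGraph V} (hK : ∀ a b, H.Adj a b → K.Adj a b) {x y : V} (hx : x ∈ H.verts)
    (hy : y ∈ H.verts) : K.Reachable x y := by
  let f : H.coe →g K := ⟨Subtype.val, fun {a b} h => hK _ _ h⟩
  exact (hH.preconnected ⟨x, hx⟩ ⟨y, hy⟩).map f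

lemma cactus_eq {V : Type*} [Finite V] {G : SimpleGraph V} (hG : IsCactus G) {H₁ H₂ : G.Subgraph}
    (h1 : IsCycleSubgraph H₁) (h2 : IsCycleSubgraph H₂) {x y : V} (hxy : x ≠ y)
    (hx1 : x ∈ H₁.verts) (hx2 : x ∈ H₂.verts) (hy1 : y ∈ H₁.verts) (hy2 : y ∈ H₂.verts) :
    H₁ = H₂ := by
  by_contra hne
  have h := hG.2 H₁ H₂ h1 h2 hne
  rw [Set.ncard_le_one (Set.toFinite _)] at h
  exact hxy (h x ⟨hx1, hx2⟩ y ⟨hy1, hy2⟩)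

lemma cyc_sep {V : Type*} [Finite V] {G : SimpleGraph V} (hG : IsCactus G) {H : G.Subgraph}
    (hH : IsCycleSubgraph H) {x y : V} (hx : x ∈ H.verts) (hy : y ∈ H.verts)
    (hr : (G.deleteEdges H.edgeSet).Reachable x y) : x = y := by
  by_contra hxy
  obtain ⟨F, hF, hac, hFr⟩ := SimpleGraph.exists_isAcyclic_reachable_eq_le
    (G := G.deleteEdges H.edgeSet)
  rw [← hFr] at hr
  obtain ⟨P, hP⟩ := hr.exists_isPath
  cases P with
  | nil => exact hxy rfl
  | @cons _ x1 _ hadj P' =>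
    rw [SimpleGraph.Walk.cons_isPath_iff] at hP
    have hfH : s(x, x1) ∉ H.edgeSet := by
      have := hF hadj
      rw [SimpleGraph.deleteEdges_adj] at this
      exact this.2
    obtain ⟨K, hKdef⟩ : ∃ K, K = F ⊔ H.spanningCoe := ⟨_, rfl⟩
    have hFK : F ≤ K := hKdef ▸ le_sup_left
    have hHK : ∀ a b, H.Adj a b → K.Adj a b := by
      intro a b h
      rw [hKdef]
      exact Or.inr h
    have hKG : K ≤ G := by
      rw [hKdef]
      exact sup_le (hF.trans (SimpleGraph.deleteEdges_le _)) H.spanningCoe_le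
    have hnb : ¬ K.IsBridge s(x, x1) := by
      rw [SimpleGraph.isBridge_iff, not_not]
      have r1 : (K.deleteEdges {s(x, x1)}).Reachable x y := by
        refine reach_of_conn hH.1 (fun a b h => ?_) hx hy
        rw [SimpleGraph.deleteEdges_adj]
        refine ⟨hHK a b h, fun he => hfH ?_⟩
        rw [Set.mem_singleton_iff] at he
        rw [← he]; exact h
      have r2 : (K.deleteEdges {s(x, x1)}).Reachable x1 y := by
        refine ⟨P'.transfer _ ?_⟩
        intro e he
        rw [SimpleGraph.edgeSet_deleteEdges]
        refine ⟨SimpleGraph.edgeSet_mono hFK (P'.edges_subset_edgeSet he), fun h => ?_⟩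
        rw [Set.mem_singleton_iff] at h
        rw [h] at he
        exact hP.2 (P'.fst_mem_support_of_mem_edges he)
      exact r1.trans r2.symm
    rw [SimpleGraph.isBridge_iff_forall_cycle_notMem (hFK hadj)] at hnb
    push Not at hnb
    obtain ⟨u, p, hp, hfp⟩ := hnb
    have hq := isCycleSubgraph_walk (hp.mapLe hKG)
    have hedges : (p.mapLe hKG).edges = p.edges := by
      simp
    obtain ⟨e, he, heH⟩ : ∃ e ∈ p.edges, e ∈ H.edgeSet := by
      by_contra hcon
      push Not at hcon
      refine hac (p.transfer F ?_) (hp.transfer _)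
      intro e he
      have := p.edges_subset_edgeSet he
      rw [hKdef, SimpleGraph.edgeSet_sup] at this
      rcases this with h | h
      · exact h
      · exact absurd (by simpa using h) (hcon e he)
    have heq : (p.mapLe hKG).toSubgraph = H := by
      induction e with
      | h a b =>
        have h1 : (p.mapLe hKG).toSubgraph.Adj a b := by
          rw [← SimpleGraph.Subgraph.mem_edgeSet, SimpleGraph.Walk.mem_edges_toSubgraph, hedges]
          exact he
        have h2 : H.Adj a b := heH
        exact cactus_eq hG hq hH (H.adj_sub h2).ne h1.fst_mem h2.fst_mem h1.snd_mem h2.snd_mem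
    apply hfH
    rw [← heq, SimpleGraph.Walk.mem_edges_toSubgraph, hedges]
    exact hfp

/-- Blocks of a cactus. -/
def IsBlk {V : Type*} (G : SimpleGraph V) (H : G.Subgraph) : Prop :=
  IsCycleSubgraph H ∨ ∃ u v, ∃ h : G.Adj u v, G.IsBridge s(u, v) ∧ H = G.subgraphOfAdj h

lemma blk_conn {V : Type*} {G : SimpleGraph V} {H : G.Subgraph} (hH : IsBlk G H) :
    H.coe.Connected := by
  rcases hH with h | ⟨u, v, h, -, rfl⟩
  · exact h.1
  · exact SimpleGraph.Subgraph.connected_iff'.mp (SimpleGraph.Subgraph.subgraphOfAdj_connected h)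

lemma blk_sep {V : Type*} [Finite V] {G : SimpleGraph V} (hG : IsCactus G) {H : G.Subgraph}
    (hH : IsBlk G H) {x y : V} (hx : x ∈ H.verts) (hy : y ∈ H.verts)
    (hr : (G.deleteEdges H.edgeSet).Reachable x y) : x = y := by
  rcases hH with h | ⟨u, v, h, hb, rfl⟩
  · exact cyc_sep hG h hx hy hr
  · rw [SimpleGraph.edgeSet_subgraphOfAdj] at hr
    rw [SimpleGraph.isBridge_iff] at hb
    simp only [SimpleGraph.subgraphOfAdj_verts, Set.mem_insert_iff, Set.mem_singleton_iff] at hx hy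
    rcases hx with rfl | rfl <;> rcases hy with rfl | rfl
    · rfl
    · exact absurd hr hb
    · exact absurd hr.symm hb
    · rfl

lemma blk_nonempty {V : Type*} {G : SimpleGraph V} {H : G.Subgraph} (hH : IsBlk G H) :
    ∃ x, x ∈ H.verts := by
  obtain ⟨x⟩ := (blk_conn hH).nonempty
  exact ⟨x.1, x.2⟩

lemma blk_reach {V : Type*} {G : SimpleGraph V} (hG : G.Connected) {H : G.Subgraph}
    (hH : IsBlk G H) (w : V) : ∃ x ∈ H.verts, (G.deleteEdges H.edgeSet).Reachable w x := by
  obtain ⟨y, hy⟩ := blk_nonempty hH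
  obtain ⟨p⟩ := hG.preconnected w y
  induction p with
  | nil => exact ⟨_, hy, SimpleGraph.Reachable.refl _⟩
  | @cons a b _ h _ ih =>
    obtain ⟨x, hx, hr⟩ := ih hy
    by_cases he : s(a, b) ∈ H.edgeSet
    · have : H.Adj a b := he
      exact ⟨a, this.fst_mem, SimpleGraph.Reachable.refl _⟩
    · refine ⟨x, hx, SimpleGraph.Reachable.trans (SimpleGraph.Adj.reachable ?_) hr⟩
      rw [SimpleGraph.deleteEdges_adj]
      exact ⟨h, he⟩

lemma cyc_walk {V : Type*} [Finite V] {G : SimpleGraph V} {H : G.Subgraph}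
    (hH : IsCycleSubgraph H) : ∃ v, ∃ p : H.spanningCoe.Walk v v, p.IsCycle ∧
      p.toSubgraph.verts = H.verts := by
  obtain ⟨⟨v, hv⟩⟩ := hH.1.nonempty
  have hmem : ∀ w, (H.spanningCoe.neighborSet w).Nonempty → w ∈ H.verts := by
    rintro w ⟨u, hu⟩
    have : H.Adj w u := hu
    exact this.fst_mem
  have hcyc : H.spanningCoe.IsCycles := by
    intro w hw
    exact hH.2 w (hmem w hw)
  obtain ⟨p, hp, hs⟩ := hcyc.exists_cycle_toSubgraph_verts_eq_connectedComponentSupp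
    (c := H.spanningCoe.connectedComponentMk v) (v := v) rfl (by
      apply Set.nonempty_of_ncard_ne_zero
      have : (H.spanningCoe.neighborSet v).ncard = 2 := hH.2 v hv
      omega)
  refine ⟨v, p, hp, hs.trans ?_⟩
  ext w
  rw [SimpleGraph.ConnectedComponent.mem_supp_iff, SimpleGraph.ConnectedComponent.eq]
  constructor
  · rintro ⟨q⟩
    cases q with
    | nil => exact hv
    | cons h _ => exact hmem _ ⟨_, h⟩
  · intro hw
    exact reach_of_conn hH.1 (fun a b h => h) hw hv

/-- Explicit cyclic parametrization. -/
lemma cyc_param {V : Type*} [Finite V] {G : SimpleGraph V} {H : G.Subgraph}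
    (hH : IsCycleSubgraph H) : ∃ (k : ℕ) (s : ℕ → V), 3 ≤ k ∧ s k = s 0 ∧
      (∀ i, i < k → H.Adj (s i) (s (i + 1))) ∧ (∀ i j, i < k → j < k → s i = s j → i = j) ∧
      (∀ x ∈ H.verts, ∃ i, i < k ∧ s i = x) := by
  obtain ⟨v, p, hp, hv⟩ := cyc_walk hH
  refine ⟨p.length, p.getVert, hp.three_le_length, by simp, fun i hi => p.adj_getVert_succ hi,
    fun i j hi hj h => hp.getVert_injOn' (by simp; omega) (by simp; omega) h, fun x hx => ?_⟩
  rw [← hv, p.verts_toSubgraph] at hx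
  obtain ⟨i, hi, hil⟩ := SimpleGraph.Walk.mem_support_iff_exists_getVert.mp hx
  rcases Nat.lt_or_ge i p.length with h | h
  · exact ⟨i, h, hi⟩
  · have : i = p.length := by omega
    refine ⟨0, by have := hp.three_le_length; omega, ?_⟩
    rw [← hi, this]; simp

lemma cyc_not_bridge {V : Type*} [Finite V] {G : SimpleGraph V} {H : G.Subgraph}
    (hH : IsCycleSubgraph H) {a b : V} (hab : H.Adj a b) : ¬ G.IsBridge s(a, b) := by
  obtain ⟨v, p, hp, hv⟩ := cyc_walk hH
  intro hb
  have ha : a ∈ p.support := by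
    have : a ∈ p.toSubgraph.verts := hv ▸ hab.fst_mem
    rwa [p.verts_toSubgraph] at this
  have h2 := hp.ncard_neighborSet_toSubgraph_eq_two ha
  have h3 : p.toSubgraph.neighborSet a = {u | H.Adj a u} := by
    apply Set.eq_of_subset_of_ncard_le
    · intro u hu
      exact p.toSubgraph.adj_sub hu
    · rw [h2, hH.2 a hab.fst_mem]
    · exact Set.toFinite _
  have h4 : b ∈ p.toSubgraph.neighborSet a := by rw [h3]; exact hab
  have h5 : s(a, b) ∈ p.edges := by
    rw [← p.mem_edges_toSubgraph]; exact h4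
  refine hb.notMem_edges_of_isCycle (hp.mapLe H.spanningCoe_le) ?_
  simpa using h5

lemma blk_disjoint {V : Type*} [Finite V] {G : SimpleGraph V} (hG : IsCactus G)
    {H H' : G.Subgraph} (hH : IsBlk G H) (hH' : IsBlk G H') (hne : H ≠ H') {a b : V}
    (h1 : H.Adj a b) (h2 : H'.Adj a b) : False := by
  rcases hH with h | ⟨u, v, h, hb, rfl⟩ <;> rcases hH' with h' | ⟨u', v', h', hb', rfl⟩
  · exact hne (cactus_eq hG h h' (H.adj_sub h1).ne h1.fst_mem h2.fst_mem h1.snd_mem h2.snd_mem)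
  · rw [SimpleGraph.subgraphOfAdj_adj] at h2
    rw [h2] at hb'
    exact cyc_not_bridge h h1 hb'
  · rw [SimpleGraph.subgraphOfAdj_adj] at h1
    rw [h1] at hb
    exact cyc_not_bridge h' h2 hb
  · apply hne
    rw [SimpleGraph.subgraphOfAdj_adj] at h1 h2
    rw [← h2] at h1
    rw [Sym2.eq_iff] at h1
    rcases h1 with ⟨rfl, rfl⟩ | ⟨rfl, rfl⟩
    · rfl
    · exact SimpleGraph.subgraphOfAdj_symm _

end Cactus

section CycleResistance
open scoped Classical
set_option linter.unusedSectionVars false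

/-- resistance between positions on a cycle of length `k` -/
noncomputable def rho (k a b : ℝ) : ℝ := |a - b| * (k - |a - b|) / k

lemma rho_symm (k a b : ℝ) : rho k a b = rho k b a := by unfold rho; rw [abs_sub_comm]

lemma rho_lap (k : ℝ) (hk : 0 < k) (i j : ℕ) :
    2 * rho k i j - rho k i (j + 1) - rho k i (j - 1) = 2 / k - (if j = i then 2 else 0) := by
  unfold rho
  rcases lt_trichotomy i j with h | h | h
  · have h' : (i:ℝ) + 1 ≤ j := by exact_mod_cast h
    rw [if_neg (by omega), abs_of_nonpos (by linarith), abs_of_nonpos (by linarith),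
      abs_of_nonpos (by linarith)]
    field_simp; ring
  · subst h
    rw [if_pos rfl]
    have e1 : |(i:ℝ) - (i + 1)| = 1 := by rw [abs_of_nonpos (by linarith)]; ring
    have e2 : |(i:ℝ) - (i - 1)| = 1 := by rw [abs_of_nonneg (by linarith)]; ring
    rw [e1, e2]; simp; field_simp; ring
  · have h' : (j:ℝ) + 1 ≤ i := by exact_mod_cast h
    rw [if_neg (by omega), abs_of_nonneg (by linarith), abs_of_nonneg (by linarith),
      abs_of_nonneg (by linarith)]
    field_simp; ring

lemma rho_wrap (k a : ℝ) (h0 : 0 ≤ a) (h1 : a ≤ k) : rho k a k = rho k a 0 := by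
  unfold rho
  rw [abs_of_nonpos (by linarith), abs_of_nonneg (by linarith)]; ring

lemma rho_wrap' (k a : ℝ) (h0 : 0 ≤ a) (h1 : a ≤ k - 1) : rho k a (k - 1) = rho k a (-1) := by
  unfold rho
  rw [abs_of_nonpos (by linarith), abs_of_nonneg (by linarith)]; ring

lemma sum_dk (k : ℝ) (m : ℕ) : ∑ d ∈ Finset.range m, (d:ℝ) * (k - d)
    = k * (m * (m - 1)) / 2 - (m - 1) * m * (2 * m - 1) / 6 := by
  induction m with
  | zero => simp
  | succ m ih => rw [Finset.sum_range_succ, ih]; push_cast; ring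

lemma rho_sum (k : ℕ) (i : ℕ) (hi : i < k) :
    ∑ j ∈ Finset.range k, rho k i j = ((k:ℝ) ^ 2 - 1) / 6 := by
  have hk : (k:ℝ) ≠ 0 := by
    have : 0 < k := by omega
    exact_mod_cast this.ne'
  have key : ∑ j ∈ Finset.range k, |(i:ℝ) - j| * (k - |(i:ℝ) - j|)
      = ∑ d ∈ Finset.range (i + 1), (d:ℝ) * (k - d)
        + ∑ d ∈ Finset.range (k - i), (d:ℝ) * (k - d) := by
    obtain ⟨m, rfl⟩ := Nat.exists_eq_add_of_lt hi
    rw [show i + m + 1 = (i + 1) + m by ring, Finset.sum_range_add,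
      show i + 1 + m - i = m + 1 by omega, Finset.sum_range_succ' _ m]
    congr 1
    · rw [← Finset.sum_range_reflect]
      refine Finset.sum_congr rfl fun d hd => ?_
      rw [Finset.mem_range] at hd
      have : ((i + 1 - 1 - d : ℕ) : ℝ) = i - d := by
        rw [Nat.cast_sub (by omega)]; simp
      rw [this]
      simp
    · simp only [Nat.cast_zero, zero_mul, add_zero]
      refine Finset.sum_congr rfl fun d _ => ?_
      have : |(i:ℝ) - ((i + 1 + d : ℕ) : ℝ)| = ((d + 1 : ℕ) : ℝ) := by
        push_cast
        rw [abs_of_nonpos (by have : (0:ℝ) ≤ d := Nat.cast_nonneg d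
                              linarith)]
        ring
      rw [this]
  simp only [rho]
  rw [← Finset.sum_div, key, sum_dk, sum_dk, Nat.cast_sub hi.le]
  field_simp
  push_cast
  ring

lemma rho_pos (k : ℕ) (hk : 3 ≤ k) (i j : ℕ) (hi : i < k) (hj : j < k) (hij : i ≠ j) :
    2 / 3 ≤ rho k i j := by
  have hk' : (3:ℝ) ≤ k := by exact_mod_cast hk
  have main : ∀ i j : ℕ, i < j → j < k → 2 / 3 ≤ rho k i j := by
    intro i j hij hj
    have h1 : (i:ℝ) + 1 ≤ j := by exact_mod_cast hij
    have h2 : (j:ℝ) + 1 ≤ k := by exact_mod_cast hj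
    have h0 : (0:ℝ) ≤ i := Nat.cast_nonneg i
    unfold rho
    rw [abs_of_nonpos (by linarith), le_div_iff₀ (by linarith)]
    nlinarith [mul_nonneg (by linarith : (0:ℝ) ≤ j - i - 1) (by linarith : (0:ℝ) ≤ k - 1 - (j - i))]
  rcases Nat.lt_or_gt_of_ne hij with h | h
  · exact main i j h hj
  · rw [rho_symm]; exact main j i h hi

/-- The local data attached to one block. -/
structure LocalData {V : Type*} [Fintype V] (G : SimpleGraph V) (vs : Finset V)
    (dg : ℕ) (kap : ℝ) (r : V → V → ℝ) : Prop where
  r_symm : ∀ x y, r x y = r y x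
  r_self : ∀ x, r x x = 0
  r_pos : ∀ x ∈ vs, ∀ y ∈ vs, x ≠ y → 2 / 3 ≤ r x y
  dg_spec : (dg = 1 ∧ vs.card = 2 ∧ kap = 1) ∨
    (dg = 2 ∧ 3 ≤ vs.card ∧ kap = ((vs.card : ℝ) ^ 2 - 1) / 6)
  deg : ∀ x ∈ vs, (Finset.univ.filter (fun v => G.Adj x v ∧ v ∈ vs)).card = dg
  sum : ∀ y ∈ vs, ∑ x ∈ vs, r y x = kap
  lap : ∀ x ∈ vs, ∀ w ∈ vs, ∑ v, (if G.Adj w v ∧ v ∈ vs then r x w - r x v else 0)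
      = 2 / (vs.card : ℝ) - (if w = x then 2 else 0)

lemma local_cycle {V : Type*} [Fintype V] {G : SimpleGraph V} {H : G.Subgraph}
    (hH : IsCycleSubgraph H) (vs : Finset V) (hvs : ∀ v, v ∈ vs ↔ v ∈ H.verts)
    (hind : ∀ w v, w ∈ vs → ((G.Adj w v ∧ v ∈ vs) ↔ H.Adj w v)) :
    ∃ kap r, LocalData G vs 2 kap r := by
  obtain ⟨k, s, hk, hs0, hadj, hinj, hsurj⟩ := cyc_param hH
  have hsmem : ∀ i, i < k → s i ∈ vs := fun i hi => (hvs _).mpr (hadj i hi).fst_mem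
  have himg : vs = (Finset.range k).image s := by
    ext v
    simp only [Finset.mem_image, Finset.mem_range]
    constructor
    · intro hv; exact hsurj v ((hvs v).mp hv)
    · rintro ⟨i, hi, rfl⟩; exact hsmem i hi
  have hinjOn : Set.InjOn s (Finset.range k : Set ℕ) := by
    intro i hi j hj h
    exact hinj i j (by simpa using hi) (by simpa using hj) h
  have hcard : vs.card = k := by
    rw [himg, Finset.card_image_of_injOn hinjOn, Finset.card_range]
  have hdeg : ∀ x ∈ vs, (Finset.univ.filter (fun v => G.Adj x v ∧ v ∈ vs)).card = 2 := by
    intro x hx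
    rw [← hH.2 x ((hvs x).mp hx), ← Set.ncard_coe_finset]
    congr 1
    ext v
    simp only [Finset.coe_filter, Finset.mem_univ, true_and, Set.mem_setOf_eq]
    exact hind x v hx
  let idx : V → ℕ := fun v => if h : ∃ i, i < k ∧ s i = v then h.choose else 0
  have hidx : ∀ i, i < k → idx (s i) = i := by
    intro i hi
    have h : ∃ i', i' < k ∧ s i' = s i := ⟨i, hi, rfl⟩
    simp only [idx, dif_pos h]
    exact hinj _ _ h.choose_spec.1 hi h.choose_spec.2
  clear_value idx
  have hk0 : (0:ℝ) < k := by
    have : 0 < k := by omega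
    exact_mod_cast this
  have hex : ∀ x ∈ vs, ∃ i, i < k ∧ s i = x := fun x hx => hsurj x ((hvs x).mp hx)
  refine ⟨((vs.card : ℝ) ^ 2 - 1) / 6, fun x y => rho k (idx x) (idx y), ?_⟩
  refine ⟨fun x y => rho_symm _ _ _, fun x => by simp [rho], ?_, ?_, hdeg, ?_, ?_⟩
  · intro x hx y hy hxy
    obtain ⟨i, hi, rfl⟩ := hex x hx
    obtain ⟨j, hj, rfl⟩ := hex y hy
    rw [hidx i hi, hidx j hj]
    exact rho_pos k hk i j hi hj (fun h => hxy (by rw [h]))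
  · right; exact ⟨rfl, by omega, rfl⟩
  · intro y hy
    obtain ⟨i, hi, rfl⟩ := hex y hy
    rw [hcard, ← rho_sum k i hi, himg, Finset.sum_image hinjOn]
    refine Finset.sum_congr rfl fun j hj => ?_
    rw [hidx i hi, hidx j (by simpa using hj)]
  · intro x hx w hw
    obtain ⟨i, hi, rfl⟩ := hex x hx
    obtain ⟨j, hj, rfl⟩ := hex w hw
    have hi1 : (i:ℝ) + 1 ≤ k := by exact_mod_cast hi
    have hi0 : (0:ℝ) ≤ i := Nat.cast_nonneg i
    obtain ⟨pv, hpv, hpvne, hpvr⟩ : ∃ pv, H.Adj (s j) pv ∧ s (j + 1) ≠ pv ∧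
        rho k i (idx pv) = rho k i ((j:ℝ) - 1) := by
      rcases Nat.eq_zero_or_pos j with h | h
      · subst h
        refine ⟨s (k - 1), ?_, ?_, ?_⟩
        · have := (hadj (k - 1) (by omega)).symm
          rwa [show k - 1 + 1 = k by omega, hs0] at this
        · intro h
          have := hinj _ _ (by omega) (by omega) h
          omega
        · rw [hidx (k-1) (by omega), Nat.cast_sub (by omega), Nat.cast_one,
            rho_wrap' k i hi0 (by linarith)]
          simp
      · refine ⟨s (j - 1), ?_, ?_, ?_⟩
        · have := (hadj (j - 1) (by omega)).symm
          rwa [show j - 1 + 1 = j by omega] at this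
        · intro h'
          rcases Nat.lt_or_ge (j + 1) k with h2 | h2
          · have := hinj _ _ h2 (by omega) h'
            omega
          · rw [show j + 1 = k by omega, hs0] at h'
            have := hinj _ _ (by omega) (by omega) h'
            omega
        · rw [hidx (j-1) (by omega), Nat.cast_sub (by omega), Nat.cast_one]
    have hnxr : rho k i (idx (s (j + 1))) = rho k i ((j:ℝ) + 1) := by
      rcases Nat.lt_or_ge (j + 1) k with h2 | h2
      · rw [hidx _ h2]; push_cast; rfl
      · have e : j + 1 = k := by omega
        have e' : (j:ℝ) + 1 = k := by exact_mod_cast e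
        rw [e, hs0, hidx 0 (by omega), e', rho_wrap k i hi0 (by linarith)]
        simp
    have hfil : Finset.univ.filter (fun v => G.Adj (s j) v ∧ v ∈ vs) = {s (j+1), pv} := by
      symm
      apply Finset.eq_of_subset_of_card_le
      · intro v hv
        simp only [Finset.mem_insert, Finset.mem_singleton] at hv
        rw [Finset.mem_filter, hind _ _ hw]
        refine ⟨Finset.mem_univ _, ?_⟩
        rcases hv with rfl | rfl
        exacts [hadj j hj, hpv]
      · rw [hdeg _ hw, Finset.card_pair hpvne]
    rw [← Finset.sum_filter, hfil, Finset.sum_pair hpvne, hidx i hi, hidx j hj, hpvr, hnxr, hcard]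
    have hl := rho_lap k hk0 i j
    have : (s j = s i) ↔ j = i := ⟨fun h => hinj _ _ hj hi h, fun h => by rw [h]⟩
    simp only [this]
    linarith

lemma local_bridge {V : Type*} [Fintype V] {G : SimpleGraph V} {a b : V} (hab : G.Adj a b)
    (vs : Finset V) (hvs : ∀ v, v ∈ vs ↔ v = a ∨ v = b) :
    ∃ kap r, LocalData G vs 1 kap r := by
  have hne : a ≠ b := hab.ne
  have hvs' : vs = {a, b} := by ext v; simp [hvs]
  have hcard : vs.card = 2 := by rw [hvs', Finset.card_pair hne]
  have hfa : Finset.univ.filter (fun v => G.Adj a v ∧ v ∈ vs) = {b} := by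
    ext v
    simp only [Finset.mem_filter, Finset.mem_univ, true_and, Finset.mem_singleton, hvs]
    constructor
    · rintro ⟨h, rfl | rfl⟩
      · exact absurd h (G.irrefl)
      · rfl
    · rintro rfl; exact ⟨hab, Or.inr rfl⟩
  have hfb : Finset.univ.filter (fun v => G.Adj b v ∧ v ∈ vs) = {a} := by
    ext v
    simp only [Finset.mem_filter, Finset.mem_univ, true_and, Finset.mem_singleton, hvs]
    constructor
    · rintro ⟨h, rfl | rfl⟩
      · rfl
      · exact absurd h (G.irrefl)
    · rintro rfl; exact ⟨hab.symm, Or.inl rfl⟩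
  refine ⟨1, fun x y => if x = y then 0 else 1, ?_⟩
  refine ⟨fun x y => by simp only [eq_comm], fun x => by simp, ?_, Or.inl ⟨rfl, hcard, rfl⟩,
    ?_, ?_, ?_⟩
  · intro x _ y _ hxy
    rw [if_neg hxy]; norm_num
  · intro x hx
    rcases (hvs x).mp hx with rfl | rfl
    · rw [hfa]; simp
    · rw [hfb]; simp
  · intro y hy
    rw [hvs', Finset.sum_pair hne]
    rcases (hvs y).mp hy with rfl | rfl
    · simp [hne]
    · simp [hne.symm]
  · intro x hx w hw
    rw [← Finset.sum_filter, hcard]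
    rcases (hvs w).mp hw with rfl | rfl
    · rw [hfa, Finset.sum_singleton]
      rcases (hvs x).mp hx with rfl | rfl
      · simp [hne]; norm_num
      · simp [hne, hne.symm]
    · rw [hfb, Finset.sum_singleton]
      rcases (hvs x).mp hx with rfl | rfl
      · simp [hne, hne.symm]
      · simp [hne.symm]; norm_num

lemma exists_local {V : Type*} [Fintype V] {G : SimpleGraph V} (hG : IsCactus G) {H : G.Subgraph}
    (hH : IsBlk G H) (vs : Finset V) (hvs : ∀ v, v ∈ vs ↔ v ∈ H.verts) :
    ∃ dg kap r, LocalData G vs dg kap r ∧ (dg = 2 ↔ IsCycleSubgraph H) := by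
  rcases id hH with h | ⟨u, v, h, hb, rfl⟩
  · obtain ⟨kap, r, hl⟩ := local_cycle h vs hvs (by
      intro w v hw
      constructor
      · rintro ⟨h1, h2⟩
        by_contra hn
        apply h1.ne
        apply blk_sep hG hH ((hvs _).mp hw) ((hvs _).mp h2)
        apply SimpleGraph.Adj.reachable
        rw [SimpleGraph.deleteEdges_adj]
        exact ⟨h1, hn⟩
      · intro h
        exact ⟨H.adj_sub h, (hvs _).mpr h.snd_mem⟩)
    exact ⟨2, kap, r, hl, by simp [h]⟩
  · obtain ⟨kap, r, hl⟩ := local_bridge h vs (fun v => by rw [hvs]; simp)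
    refine ⟨1, kap, r, hl, ⟨fun h => by omega, fun hc => ?_⟩⟩
    exact absurd hb (cyc_not_bridge hc (by simp))

lemma exists_BD {V : Type*} [Fintype V] {G : SimpleGraph V} (hG : IsCactus G) :
    ∃ D : BD G {H : G.Subgraph // IsBlk G H}, ∀ B, D.dg B = 2 ↔ IsCycleSubgraph B.1 := by
  let vs : {H : G.Subgraph // IsBlk G H} → Finset V :=
    fun B => Finset.univ.filter (fun v => v ∈ B.1.verts)
  have hvs : ∀ B v, v ∈ vs B ↔ v ∈ B.1.verts := fun B v => by simp [vs]
  clear_value vs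
  choose dg kap r hl hdg using fun B : {H : G.Subgraph // IsBlk G H} =>
    exists_local hG B.2 (vs B) (hvs B)
  choose pr hpr1 hpr2 using fun (B : {H : G.Subgraph // IsBlk G H}) w => blk_reach hG.1 B.2 w
  have hpr : ∀ B w x, x ∈ B.1.verts → (G.deleteEdges B.1.edgeSet).Reachable w x → pr B w = x :=
    fun B w x hx hr => blk_sep hG B.2 (hpr1 B w) hx ((hpr2 B w).symm.trans hr)
  refine ⟨⟨vs, pr, dg, kap, r, fun B w => (hvs _ _).mpr (hpr1 B w),
    fun B w hw => hpr B w w ((hvs _ _).mp hw) (SimpleGraph.Reachable.refl _), ?_, ?_,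
    fun B => (hl B).r_symm, fun B => (hl B).r_self, fun B => (hl B).r_pos,
    fun B => (hl B).dg_spec, fun B => (hl B).deg, fun B => (hl B).sum, fun B => (hl B).lap⟩, hdg⟩
  · intro B B' hne x hx y hy
    refine hpr B x _ (hpr1 B y) (SimpleGraph.Reachable.trans ?_ (hpr2 B y))
    refine reach_of_conn (blk_conn B'.2) (fun a b h => ?_) ((hvs _ _).mp hx) ((hvs _ _).mp hy)
    rw [SimpleGraph.deleteEdges_adj]
    exact ⟨B'.1.adj_sub h, fun h' => blk_disjoint hG B.2 B'.2 (fun e => hne (Subtype.ext e)) h' h⟩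
  · intro u v huv
    by_cases hb : G.IsBridge s(u, v)
    · refine ⟨⟨G.subgraphOfAdj huv, Or.inr ⟨u, v, huv, hb, rfl⟩⟩, ?_, ?_⟩ <;> rw [hvs] <;> simp
    · rw [SimpleGraph.isBridge_iff_forall_cycle_notMem huv] at hb
      push Not at hb
      obtain ⟨w, p, hp, he⟩ := hb
      have h : p.toSubgraph.Adj u v := by
        rw [← SimpleGraph.Subgraph.mem_edgeSet, p.mem_edges_toSubgraph]; exact he
      exact ⟨⟨p.toSubgraph, Or.inl (isCycleSubgraph_walk hp)⟩, (hvs _ _).mpr h.fst_mem,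
        (hvs _ _).mpr h.snd_mem⟩

lemma final_cactus (n t : ℕ) (hn : 7 ≤ n) (ht : 1 ≤ t)
    {V : Type*} [Finite V] (G : SimpleGraph V) (hG : MemCact n t G)
    (hnot : ¬ Nonempty (G ≃g G0 n t)) :
    -(4 / 3) * (t : ℝ) ^ 2 + ((4 / 3) * (n : ℝ) - 13 / 3) * t
        + 3 * (n : ℝ) ^ 2 - (16 / 3) * n - 19 / 3 ≤ degRes G ∧
    (degRes G = -(4 / 3) * (t : ℝ) ^ 2 + ((4 / 3) * (n : ℝ) - 13 / 3) * t
        + 3 * (n : ℝ) ^ 2 - (16 / 3) * n - 19 / 3 ↔ Nonempty (G ≃g G5g n t)) := by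
  letI := Fintype.ofFinite V
  obtain ⟨hc, hcard, hcyc⟩ := hG
  obtain ⟨D, hD⟩ := exists_BD hc
  letI := Fintype.ofFinite {H : G.Subgraph // IsBlk G H}
  refine D.final hc.1 n t (by rw [← hcard, Nat.card_eq_fintype_card]) hn ht ?_ hnot
  rw [← hcyc, numCycles, ← Set.ncard_coe_finset]
  refine Set.ncard_congr (fun B _ => B.1) ?_ ?_ ?_
  · intro B hB
    simp only [Finset.coe_filter, Finset.mem_univ, true_and, Set.mem_setOf_eq] at hB
    exact (hD B).mp hB
  · intro B B' _ _ h
    exact Subtype.ext h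
  · intro H hH
    exact ⟨⟨H, Or.inl hH⟩, by simpa using (hD ⟨H, Or.inl hH⟩).mpr hH, rfl⟩

end CycleResistance

/-- Corollary 4.2: for `G ∈ Cact(n;t)` not isomorphic to `G⁰(n,t)`, with `n ≥ 7`,
`t ≥ 1`, one has `D_R(G) ≥ -(4/3)t² + ((4/3)n - 13/3)t + 3n² - (16/3)n - 19/3`,
with equality iff `G ≅ G5`. -/
theorem stmt_12 (n t : ℕ) (hn : 7 ≤ n) (ht : 1 ≤ t)
    {V : Type*} [Finite V] (G : SimpleGraph V) (hG : MemCact n t G)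
    (hnot : ¬ Nonempty (G ≃g G0 n t)) :
    -(4 / 3) * (t : ℝ) ^ 2 + ((4 / 3) * (n : ℝ) - 13 / 3) * t
        + 3 * (n : ℝ) ^ 2 - (16 / 3) * n - 19 / 3 ≤ degRes G ∧
    (degRes G = -(4 / 3) * (t : ℝ) ^ 2 + ((4 / 3) * (n : ℝ) - 13 / 3) * t
        + 3 * (n : ℝ) ^ 2 - (16 / 3) * n - 19 / 3 ↔ Nonempty (G ≃g G5g n t)) := by
  exact final_cactus n t hn ht G hG hnot
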